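/- With the Falk–Winther local bounded commuting projections I_h^g, I_h^{ND}, I_h^{BDM}, Q_h and the operators I_{h0}^{gc}, I_h^{gc}, I_{h0}^d, I_h^d defined from them, the following commutation relations hold: (i) I_{h0}^{gc}(∇v) = ∇(I_h^g v) for all v ∈ H₀¹(Ω); (ii) I_{h0}^d(curl v) = curl(I_{h0}^{gc} v) for all v ∈ H₀(grad curl, Ω); (iii) div(I_{h0}^d v) = Q_h(div v) for all v ∈ H₀¹(Ω;ℝ³); and the analogous identities for I_h^{gc}, I_h^d on H₀¹(Ω), H(grad curl,Ω)∩H₀(curl,Ω), and H¹(Ω;ℝ³)∩H₀(div,Ω). -/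

import Mathlib

open MeasureTheory
open scoped Classical

noncomputable section

/-! ### Basic vector calculus on ℝ³ -/

abbrev Vec : Type := Fin 3 → ℝ
abbrev Mat : Type := Fin 3 → Fin 3 → ℝ

/-- Euclidean dot product on ℝ³. -/
def dot3 (v w : Vec) : ℝ := ∑ i, v i * w i
/-- squared Euclidean norm. -/
def nsq3 (v : Vec) : ℝ := dot3 v v
/-- Euclidean norm. -/
def enorm3 (v : Vec) : ℝ := Real.sqrt (dot3 v v)
/-- normalization to a unit vector. -/
def normalize3 (v : Vec) : Vec := (enorm3 v)⁻¹ • v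
/-- cross product on ℝ³. -/
def cross3 (v w : Vec) : Vec :=
  ![v 1 * w 2 - v 2 * w 1, v 2 * w 0 - v 0 * w 2, v 0 * w 1 - v 1 * w 0]
/-- Frobenius inner product of 3×3 matrices. -/
def dotM (A B : Mat) : ℝ := ∑ i, ∑ j, A i j * B i j
/-- squared Frobenius norm. -/
def nsqM (A : Mat) : ℝ := dotM A A

/-- partial derivative ∂ᵢ of a scalar field. -/
def pd (i : Fin 3) (f : Vec → ℝ) (x : Vec) : ℝ := fderiv ℝ f x (Pi.single i 1)
/-- gradient of a scalar field. -/
def grad3 (f : Vec → ℝ) (x : Vec) : Vec := fun i => pd i f x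
/-- curl of a vector field. -/
def curl3 (v : Vec → Vec) (x : Vec) : Vec :=
  ![pd 1 (fun y => v y 2) x - pd 2 (fun y => v y 1) x,
    pd 2 (fun y => v y 0) x - pd 0 (fun y => v y 2) x,
    pd 0 (fun y => v y 1) x - pd 1 (fun y => v y 0) x]
/-- divergence of a vector field. -/
def div3 (v : Vec → Vec) (x : Vec) : ℝ := ∑ i, pd i (fun y => v y i) x
/-- Jacobian matrix of a vector field. -/
def jac3 (v : Vec → Vec) (x : Vec) : Mat := fun i j => pd j (fun y => v y i) x
/-- application of a matrix to a vector (e.g. normal derivative ∂ₙ). -/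
def japply (J : Mat) (n : Vec) : Vec := fun i => ∑ j, J i j * n j

/-- iterated partial derivatives along a list of directions. -/
def pdIter : List (Fin 3) → (Vec → ℝ) → Vec → ℝ
  | [], f => f
  | i :: l, f => pd i (pdIter l f)

/-- `f` is (the function of) a polynomial of total degree at most `k`. -/
def PolyDeg (k : ℕ) (f : Vec → ℝ) : Prop :=
  ∃ p : MvPolynomial (Fin 3) ℝ, p.totalDegree ≤ k ∧ ∀ x, f x = MvPolynomial.eval x p
/-- vector-valued polynomial of total degree at most `k`. -/
def VPolyDeg (k : ℕ) (v : Vec → Vec) : Prop := ∀ i, PolyDeg k fun x => v x i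

/-! ### Tetrahedra -/

/-- A (nondegenerate) tetrahedron in ℝ³, given by its four vertices. -/
structure Tetra where
  vtx : Fin 4 → Vec
  indep : AffineIndependent ℝ vtx

namespace Tetra

/-- the tetrahedron as a closed subset of ℝ³. -/
def K (T : Tetra) : Set Vec := convexHull ℝ (Set.range T.vtx)
/-- the edge joining vertices `i`, `j`. -/
def edge (T : Tetra) (i j : Fin 4) : Set Vec := segment ℝ (T.vtx i) (T.vtx j)
/-- a unit tangent vector of the edge joining vertices `i`, `j`. -/
def tangent (T : Tetra) (i j : Fin 4) : Vec := normalize3 (T.vtx j - T.vtx i)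
/-- the face opposite to vertex `i`. -/
def face (T : Tetra) (i : Fin 4) : Set Vec := convexHull ℝ (T.vtx '' {j | j ≠ i})
/-- unit outward normal of the face opposite to vertex `i`. -/
def outNormal (T : Tetra) (i : Fin 4) : Vec :=
  let a := T.vtx (i.succAbove 0)
  let u := cross3 (T.vtx (i.succAbove 1) - a) (T.vtx (i.succAbove 2) - a)
  (if 0 < dot3 u (T.vtx i - a) then (-1 : ℝ) else 1) • normalize3 u

/-- `lam` is the family of barycentric coordinates of `T`. -/
def IsBary (T : Tetra) (lam : Fin 4 → Vec → ℝ) : Prop :=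
  (∀ i, PolyDeg 1 (lam i)) ∧ ∀ i j, lam i (T.vtx j) = if i = j then (1 : ℝ) else 0
/-- `b` is the (quartic) bubble function of `T`. -/
def IsBubble (T : Tetra) (b : Vec → ℝ) : Prop :=
  ∃ lam, T.IsBary lam ∧ ∀ x, b x = ∏ i, lam i x

end Tetra

/-! ### Local shape function spaces -/

/-- the local space `W_k(K) = ∇P_{k+1}(K) ⊕ x × P₁(K;ℝ³) ⊕ b_K P₁(K;ℝ³)`. -/
def MemW (k : ℕ) (T : Tetra) (v : Vec → Vec) : Prop :=
  ∃ (q : Vec → ℝ) (p r : Vec → Vec) (b : Vec → ℝ), T.IsBubble b ∧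
    PolyDeg (k + 1) q ∧ VPolyDeg 1 p ∧ VPolyDeg 1 r ∧
    ∀ x, v x = grad3 q x + cross3 x (p x) + b x • r x

/-- the local Tai–Winther space `V^d(K) = P₁(K;ℝ³) ⊕ curl(b_K P₁(K;ℝ³))`. -/
def MemVd (T : Tetra) (v : Vec → Vec) : Prop :=
  ∃ (p r : Vec → Vec) (b : Vec → ℝ), T.IsBubble b ∧ VPolyDeg 1 p ∧ VPolyDeg 1 r ∧
    ∀ x, v x = p x + curl3 (fun y => b y • r y) x

/-- the local Nédélec space `V_k^{ND}(K) = ∇P_{k+1}(K) ⊕ x × P₁(K;ℝ³)`, `k = 1,2`. -/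
def MemND (k : ℕ) (v : Vec → Vec) : Prop :=
  ∃ (q : Vec → ℝ) (p : Vec → Vec), PolyDeg (k + 1) q ∧ VPolyDeg 1 p ∧
    ∀ x, v x = grad3 q x + cross3 x (p x)

/-- the face test space `RM_{k-2}(F) = P₀(F;ℝ²) ⊕ x^⊥ P_{k-2}(F)` on the face with
unit normal `n`; for `k = 1` this is just `P₀(F;ℝ²)`. -/
def MemRM (k : ℕ) (n : Vec) (q : Vec → Vec) : Prop :=
  ∃ (a : Vec) (c : ℝ), dot3 a n = 0 ∧ (k ≤ 1 → c = 0) ∧ ∀ x, q x = a + c • cross3 n x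

/-- the face test space `RT(F) = P₀(F;ℝ²) ⊕ x P₀(F)` on the face with unit normal `n`. -/
def MemRT (n : Vec) (q : Vec → Vec) : Prop :=
  ∃ (a : Vec) (c : ℝ), dot3 a n = 0 ∧ ∀ x, q x = a + c • (x - dot3 x n • n)

/-! ### Degrees of freedom -/

/-- edge moment `∫_e (v⋅t) q ds`. -/
def edgeMoment (T : Tetra) (a b : Fin 4) (v : Vec → Vec) (q : Vec → ℝ) : ℝ :=
  ∫ x in T.edge a b, dot3 (v x) (T.tangent a b) * q x ∂μH[1]
/-- tangential face moment `∫_F (v × n)⋅q dS`. -/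
def faceTanMoment (T : Tetra) (a : Fin 4) (v : Vec → Vec) (q : Vec → Vec) : ℝ :=
  ∫ x in T.face a, dot3 (cross3 (v x) (T.outNormal a)) (q x) ∂μH[2]
/-- normal face moment `∫_F (v⋅n) q dS`. -/
def faceNorMoment (T : Tetra) (a : Fin 4) (v : Vec → Vec) (q : Vec → ℝ) : ℝ :=
  ∫ x in T.face a, dot3 (v x) (T.outNormal a) * q x ∂μH[2]
/-- surface integral over a face. -/
def faceInt2 (T : Tetra) (a : Fin 4) (g : Vec → ℝ) : ℝ := ∫ x in T.face a, g x ∂μH[2]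
/-- diameter of a face. -/
def hF (T : Tetra) (a : Fin 4) : ℝ := Metric.diam (T.face a)

/-! ### Meshes -/

/-- A face-to-face tetrahedral mesh. -/
structure Mesh where
  n : ℕ
  npos : 0 < n
  el : Fin n → Tetra
  disj : ∀ i j, i ≠ j → interior (el i).K ∩ interior (el j).K = ∅
  conform : ∀ i j, i ≠ j → ∃ s e : Set (Fin 4),
    (el i).vtx '' s = (el j).vtx '' e ∧ (el i).K ∩ (el j).K = convexHull ℝ ((el i).vtx '' s)

namespace Mesh
/-- the open domain triangulated by the mesh. -/
def domain (M : Mesh) : Set Vec := interior (⋃ i, (M.el i).K)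
/-- the mesh triangulates the (connected, polyhedral) domain `Ω`. -/
def Covers (M : Mesh) (Ω : Set Vec) : Prop :=
  Ω = M.domain ∧ closure Ω = (⋃ i, (M.el i).K) ∧ IsConnected Ω
/-- the mesh size `h`. -/
def hsize (M : Mesh) : ℝ := ⨆ i, Metric.diam (M.el i).K
/-- shape regularity with constant `ρ`. -/
def ShapeReg (ρ : ℝ) (M : Mesh) : Prop :=
  ∀ i, ∃ x, Metric.ball x (ρ * Metric.diam (M.el i).K) ⊆ (M.el i).K
end Mesh

/-- A bounded polyhedral domain: a connected open set triangulated by some tetrahedral mesh. -/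
def PolyhedralDomain (Ω : Set Vec) : Prop := ∃ M : Mesh, M.Covers Ω

/-- piecewise vector fields on a mesh (one smooth representative per element). -/
abbrev DiscVF (M : Mesh) := Fin M.n → Vec → Vec
/-- piecewise scalar fields on a mesh. -/
abbrev DiscSF (M : Mesh) := Fin M.n → Vec → ℝ

/-- elementwise average (the `L²`-projection onto piecewise constants). -/
def avg (M : Mesh) (g : Vec → ℝ) (i : Fin M.n) : ℝ :=
  (∫ x in (M.el i).K, g x) / (volume (M.el i).K).toReal

/-! ### Global finite element spaces -/

/-- the `H(grad curl)`-nonconforming space `W_h`: piecewise `W_k(K)`, all DoFs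
single-valued, and the edge DoFs and `RM`-face DoFs vanishing on `∂Ω`. -/
def MemWh (k : ℕ) (M : Mesh) (Ω : Set Vec) (u : DiscVF M) : Prop :=
  (∀ i, MemW k (M.el i) (u i)) ∧
  (∀ i j a b c d, i ≠ j → (M.el i).edge a b = (M.el j).edge c d →
     ∀ q, PolyDeg k q → edgeMoment (M.el i) a b (u i) q = edgeMoment (M.el i) a b (u j) q) ∧
  (∀ i j a b, i ≠ j → (M.el i).face a = (M.el j).face b →
     ∀ q, MemRM k ((M.el i).outNormal a) q →
       faceTanMoment (M.el i) a (u i) q = faceTanMoment (M.el i) a (u j) q) ∧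
  (∀ i j a b, i ≠ j → (M.el i).face a = (M.el j).face b →
     ∀ q, MemRT ((M.el i).outNormal a) q →
       faceTanMoment (M.el i) a (curl3 (u i)) q = faceTanMoment (M.el i) a (curl3 (u j)) q) ∧
  (∀ i a b, (M.el i).edge a b ⊆ frontier Ω →
     ∀ q, PolyDeg k q → edgeMoment (M.el i) a b (u i) q = 0) ∧
  (∀ i a, (M.el i).face a ⊆ frontier Ω →
     ∀ q, MemRM k ((M.el i).outNormal a) q → faceTanMoment (M.el i) a (u i) q = 0)

/-- the space `W_{h0}`: all DoFs, including the curl-trace face DoFs, vanish on `∂Ω`. -/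
def MemWh0 (k : ℕ) (M : Mesh) (Ω : Set Vec) (u : DiscVF M) : Prop :=
  MemWh k M Ω u ∧
  ∀ i a, (M.el i).face a ⊆ frontier Ω →
    ∀ q, MemRT ((M.el i).outNormal a) q → faceTanMoment (M.el i) a (curl3 (u i)) q = 0

/-- the degree-`(k+1)` Lagrange space with zero boundary trace. -/
def MemVhg (k : ℕ) (M : Mesh) (Ω : Set Vec) (u : DiscSF M) : Prop :=
  (∀ i, PolyDeg (k + 1) (u i)) ∧
  (∀ i j, ∀ x ∈ (M.el i).K ∩ (M.el j).K, u i x = u j x) ∧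
  (∀ i, ∀ x ∈ (M.el i).K ∩ frontier Ω, u i x = 0)

/-- the Tai–Winther space `V_h^d`: normal components continuous, tangential `RT`-moments
single-valued, normal DoFs vanishing on `∂Ω`. -/
def MemVhd (M : Mesh) (Ω : Set Vec) (u : DiscVF M) : Prop :=
  (∀ i, MemVd (M.el i) (u i)) ∧
  (∀ i j a b, i ≠ j → (M.el i).face a = (M.el j).face b →
     (∀ q, PolyDeg 1 q → faceNorMoment (M.el i) a (u i) q = faceNorMoment (M.el i) a (u j) q) ∧
     (∀ q, MemRT ((M.el i).outNormal a) q →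
       faceTanMoment (M.el i) a (u i) q = faceTanMoment (M.el i) a (u j) q)) ∧
  (∀ i a, (M.el i).face a ⊆ frontier Ω →
     ∀ q, PolyDeg 1 q → faceNorMoment (M.el i) a (u i) q = 0)

/-- the Tai–Winther space `V_{h0}^d` with all DoFs vanishing on `∂Ω`. -/
def MemVh0d (M : Mesh) (Ω : Set Vec) (u : DiscVF M) : Prop :=
  MemVhd M Ω u ∧
  ∀ i a, (M.el i).face a ⊆ frontier Ω →
    ∀ q, MemRT ((M.el i).outNormal a) q → faceTanMoment (M.el i) a (u i) q = 0

/-- the piecewise-constant space `𝒬_h` with zero mean. -/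
def MemQh (M : Mesh) (q : Fin M.n → ℝ) : Prop :=
  ∑ i, q i * (volume (M.el i).K).toReal = 0

/-- the Nédélec space with vanishing tangential boundary DoFs. -/
def MemVND (k : ℕ) (M : Mesh) (Ω : Set Vec) (u : DiscVF M) : Prop :=
  (∀ i, MemND k (u i)) ∧
  (∀ i j a b c d, i ≠ j → (M.el i).edge a b = (M.el j).edge c d →
     ∀ q, PolyDeg k q → edgeMoment (M.el i) a b (u i) q = edgeMoment (M.el i) a b (u j) q) ∧
  (∀ i j a b, i ≠ j → (M.el i).face a = (M.el j).face b →
     ∀ q, MemRM k ((M.el i).outNormal a) q →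
       faceTanMoment (M.el i) a (u i) q = faceTanMoment (M.el i) a (u j) q) ∧
  (∀ i a b, (M.el i).edge a b ⊆ frontier Ω →
     ∀ q, PolyDeg k q → edgeMoment (M.el i) a b (u i) q = 0) ∧
  (∀ i a, (M.el i).face a ⊆ frontier Ω →
     ∀ q, MemRM k ((M.el i).outNormal a) q → faceTanMoment (M.el i) a (u i) q = 0)

/-- the lowest-order BDM space with vanishing normal boundary trace. -/
def MemVBDM (M : Mesh) (Ω : Set Vec) (u : DiscVF M) : Prop :=
  (∀ i, VPolyDeg 1 (u i)) ∧
  (∀ i j a b, i ≠ j → (M.el i).face a = (M.el j).face b →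
     ∀ x ∈ (M.el i).face a, dot3 (u i x) ((M.el i).outNormal a) = dot3 (u j x) ((M.el i).outNormal a)) ∧
  (∀ i a, (M.el i).face a ⊆ frontier Ω →
     ∀ x ∈ (M.el i).face a, dot3 (u i x) ((M.el i).outNormal a) = 0)

/-! ### Discrete norms and bilinear forms -/

/-- broken `L²` norm of a piecewise vector field. -/
def L2d (M : Mesh) (w : DiscVF M) : ℝ :=
  Real.sqrt (∑ i, ∫ x in (M.el i).K, nsq3 (w i x))
/-- `L²` norm of the (elementwise) curl. -/
def L2curl (M : Mesh) (w : DiscVF M) : ℝ :=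
  Real.sqrt (∑ i, ∫ x in (M.el i).K, nsq3 (curl3 (w i) x))
/-- broken `H¹` seminorm of the curl, `|curl v|_{1,h}`. -/
def semiCurl (M : Mesh) (w : DiscVF M) : ℝ :=
  Real.sqrt (∑ i, ∫ x in (M.el i).K, nsqM (jac3 (curl3 (w i)) x))
/-- the norm `‖v‖_{ε,h}`. -/
def epsNorm (ε : ℝ) (M : Mesh) (w : DiscVF M) : ℝ :=
  Real.sqrt ((L2d M w) ^ 2 + (L2curl M w) ^ 2 + ε ^ 2 * (semiCurl M w) ^ 2)
/-- broken `H¹` seminorm of a piecewise scalar field. -/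
def semiGrad (M : Mesh) (μ : DiscSF M) : ℝ :=
  Real.sqrt (∑ i, ∫ x in (M.el i).K, nsq3 (grad3 (μ i) x))

/-- `a_h(w,v) = Σ_K (∇curl w, ∇curl v)_K`. -/
def ah (M : Mesh) (w v : DiscVF M) : ℝ :=
  ∑ i, ∫ x in (M.el i).K, dotM (jac3 (curl3 (w i)) x) (jac3 (curl3 (v i)) x)
/-- `b(w,v) = (curl w, curl v)`. -/
def bh (M : Mesh) (w v : DiscVF M) : ℝ :=
  ∑ i, ∫ x in (M.el i).K, dot3 (curl3 (w i) x) (curl3 (v i) x)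
/-- `c(v,μ) = (v, ∇μ)`. -/
def ch (M : Mesh) (v : DiscVF M) (μ : DiscSF M) : ℝ :=
  ∑ i, ∫ x in (M.el i).K, dot3 (v i x) (grad3 (μ i) x)
/-- load functional `(f, v)`. -/
def fpair (M : Mesh) (f : Vec → Vec) (v : DiscVF M) : ℝ :=
  ∑ i, ∫ x in (M.el i).K, dot3 (f x) (v i x)

/-- `a_h(u, v_h)` with a continuous first argument, given by `J = ∇curl u`. -/
def ahC (M : Mesh) (J : Vec → Mat) (v : DiscVF M) : ℝ :=
  ∑ i, ∫ x in (M.el i).K, dotM (J x) (jac3 (curl3 (v i)) x)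
/-- `b(u, v_h)` with a continuous first argument, given by `cu = curl u`. -/
def bhC (M : Mesh) (cu : Vec → Vec) (v : DiscVF M) : ℝ :=
  ∑ i, ∫ x in (M.el i).K, dot3 (cu x) (curl3 (v i) x)

/-- broken `L²` distance between a function and a piecewise field. -/
def errL2 (M : Mesh) (v : Vec → Vec) (w : DiscVF M) : ℝ :=
  Real.sqrt (∑ i, ∫ x in (M.el i).K, nsq3 (v x - w i x))
/-- broken `L²` distance of curls, the first argument given by `cu = curl u`. -/
def errCurl (M : Mesh) (cu : Vec → Vec) (w : DiscVF M) : ℝ :=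
  Real.sqrt (∑ i, ∫ x in (M.el i).K, nsq3 (cu x - curl3 (w i) x))
/-- broken `H¹` distance of curls, the first argument given by `J = ∇curl u`. -/
def errSemi (M : Mesh) (J : Vec → Mat) (w : DiscVF M) : ℝ :=
  Real.sqrt (∑ i, ∫ x in (M.el i).K, nsqM (J x - jac3 (curl3 (w i)) x))
/-- error in the `‖·‖_{ε,h}` norm between `u` (with `curl u = cu`, `∇curl u = J`)
and a piecewise field `w`. -/
def errNorm (ε : ℝ) (M : Mesh) (u cu : Vec → Vec) (J : Vec → Mat) (w : DiscVF M) : ℝ :=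
  Real.sqrt ((errL2 M u w) ^ 2 + (errCurl M cu w) ^ 2 + ε ^ 2 * (errSemi M J w) ^ 2)
/-- broken `H¹` distance between a function with Jacobian `J` and a piecewise field. -/
def errJac (M : Mesh) (J : Vec → Mat) (w : DiscVF M) : ℝ :=
  Real.sqrt (∑ i, ∫ x in (M.el i).K, nsqM (J x - jac3 (w i) x))

/-- sum of a quantity over the boundary faces of the mesh. -/
def bdrySum (M : Mesh) (Ω : Set Vec) (g : Fin M.n → Fin 4 → ℝ) : ℝ :=
  ∑ i, ∑ a, if (M.el i).face a ⊆ frontier Ω then g i a else 0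

/-- the boundary part `ε² Σ_{F⊆∂Ω} h_F⁻¹ ‖curl v‖²_F` of the Nitsche norm. -/
def tripExtra (ε : ℝ) (M : Mesh) (Ω : Set Vec) (v : DiscVF M) : ℝ :=
  ε ^ 2 * bdrySum M Ω fun i a =>
    (hF (M.el i) a)⁻¹ * faceInt2 (M.el i) a fun x => nsq3 (curl3 (v i) x)
/-- the Nitsche norm `|||v|||_{ε,h}`. -/
def tripNorm (ε : ℝ) (M : Mesh) (Ω : Set Vec) (v : DiscVF M) : ℝ :=
  Real.sqrt ((epsNorm ε M v) ^ 2 + tripExtra ε M Ω v)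
/-- error in the Nitsche norm `|||·|||_{ε,h}`. -/
def errTrip (ε : ℝ) (M : Mesh) (Ω : Set Vec) (u cu : Vec → Vec) (J : Vec → Mat)
    (w : DiscVF M) : ℝ :=
  Real.sqrt ((errNorm ε M u cu J w) ^ 2 + ε ^ 2 * bdrySum M Ω fun i a =>
    (hF (M.el i) a)⁻¹ * faceInt2 (M.el i) a fun x => nsq3 (cu x - curl3 (w i) x))

/-- the Nitsche bilinear form `ã_h` on discrete functions. -/
def atildeD (σ : ℝ) (M : Mesh) (Ω : Set Vec) (w v : DiscVF M) : ℝ :=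
  ah M w v
  - bdrySum M Ω (fun i a => faceInt2 (M.el i) a fun x =>
      dot3 (japply (jac3 (curl3 (w i)) x) ((M.el i).outNormal a)) (curl3 (v i) x))
  - bdrySum M Ω (fun i a => faceInt2 (M.el i) a fun x =>
      dot3 (curl3 (w i) x) (japply (jac3 (curl3 (v i)) x) ((M.el i).outNormal a)))
  + bdrySum M Ω (fun i a => (σ / hF (M.el i) a) * faceInt2 (M.el i) a fun x =>
      dot3 (curl3 (w i) x) (curl3 (v i) x))

/-- the Nitsche form `ã_h(u, v_h)` with continuous first argument `u`
(`cu = curl u`, `J = ∇curl u`). -/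
def atildeC (σ : ℝ) (M : Mesh) (Ω : Set Vec) (cu : Vec → Vec) (J : Vec → Mat)
    (v : DiscVF M) : ℝ :=
  ahC M J v
  - bdrySum M Ω (fun i a => faceInt2 (M.el i) a fun x =>
      dot3 (japply (J x) ((M.el i).outNormal a)) (curl3 (v i) x))
  - bdrySum M Ω (fun i a => faceInt2 (M.el i) a fun x =>
      dot3 (cu x) (japply (jac3 (curl3 (v i)) x) ((M.el i).outNormal a)))
  + bdrySum M Ω (fun i a => (σ / hF (M.el i) a) * faceInt2 (M.el i) a fun x =>
      dot3 (cu x) (curl3 (v i) x))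
/-! ### Sobolev spaces via weak (distributional) derivatives -/

/-- smooth compactly supported scalar test functions on ℝ³. -/
def TestS (φ : Vec → ℝ) : Prop := ContDiff ℝ (⊤ : ℕ∞) φ ∧ HasCompactSupport φ
/-- smooth compactly supported vector test functions on ℝ³. -/
def TestV (φ : Vec → Vec) : Prop := ContDiff ℝ (⊤ : ℕ∞) φ ∧ HasCompactSupport φ

/-- extension by zero outside `Ω`. -/
def zextS (Ω : Set Vec) (f : Vec → ℝ) : Vec → ℝ := Ω.indicator f
/-- extension by zero outside `Ω` (vector-valued). -/
def zextV (Ω : Set Vec) (v : Vec → Vec) : Vec → Vec := Ω.indicator v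

/-- membership in `L²(Ω)`. -/
def MemL2S (Ω : Set Vec) (f : Vec → ℝ) : Prop := MemLp f 2 (volume.restrict Ω)
/-- membership in `L²(Ω;ℝ³)`. -/
def MemL2V (Ω : Set Vec) (v : Vec → Vec) : Prop := MemLp v 2 (volume.restrict Ω)

/-- `L²(Ω)` norm. -/
def L2SΩ (Ω : Set Vec) (f : Vec → ℝ) : ℝ := Real.sqrt (∫ x in Ω, (f x) ^ 2)
/-- `L²(Ω;ℝ³)` norm. -/
def L2VΩ (Ω : Set Vec) (v : Vec → Vec) : ℝ := Real.sqrt (∫ x in Ω, nsq3 (v x))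

/-- `g = ∂ᵢ f` in the sense of distributions on all of ℝ³. -/
def WkPD (i : Fin 3) (f g : Vec → ℝ) : Prop :=
  ∀ φ, TestS φ → ∫ x, g x * φ x = -∫ x, f x * pd i φ x
/-- `w = curl v` in the sense of distributions on all of ℝ³. -/
def WkCurlAll (v w : Vec → Vec) : Prop :=
  ∀ φ, TestV φ → ∫ x, dot3 (w x) (φ x) = ∫ x, dot3 (v x) (curl3 φ x)
/-- `d = div v` in the sense of distributions on all of ℝ³. -/
def WkDivAll (v : Vec → Vec) (d : Vec → ℝ) : Prop :=
  ∀ φ, TestS φ → ∫ x, d x * φ x = -∫ x, dot3 (v x) (grad3 φ x)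

/-- `g = ∂ᵢ f` in the sense of distributions on `Ω`. -/
def WkPDIn (Ω : Set Vec) (i : Fin 3) (f g : Vec → ℝ) : Prop :=
  ∀ φ, TestS φ → tsupport φ ⊆ Ω → ∫ x in Ω, g x * φ x = -∫ x in Ω, f x * pd i φ x
/-- `J` is the distributional Jacobian of `v` on `Ω`. -/
def WkJacIn (Ω : Set Vec) (v : Vec → Vec) (J : Vec → Mat) : Prop :=
  ∀ a b, WkPDIn Ω b (fun x => v x a) fun x => J x a b
/-- `g = ∂^α f` (`α` a list of directions) in the sense of distributions on `Ω`. -/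
def WkIterIn (Ω : Set Vec) (l : List (Fin 3)) (f g : Vec → ℝ) : Prop :=
  ∀ φ, TestS φ → tsupport φ ⊆ Ω →
    ∫ x in Ω, g x * φ x = (-1 : ℝ) ^ l.length * ∫ x in Ω, f x * pdIter l φ x
/-- `div v = 0` in the sense of distributions on `Ω`. -/
def WkDivFree (Ω : Set Vec) (v : Vec → Vec) : Prop :=
  ∀ φ, TestS φ → tsupport φ ⊆ Ω → ∫ x in Ω, dot3 (v x) (grad3 φ x) = 0

/-- scalar `H₀¹(Ω)` (via zero extension), with weak gradient `g`. -/
def MemH01S (Ω : Set Vec) (f : Vec → ℝ) (g : Vec → Vec) : Prop :=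
  MemL2S Ω f ∧ MemL2V Ω g ∧ ∀ i, WkPD i (zextS Ω f) fun x => zextV Ω g x i
/-- `H₀(curl,Ω)` (via zero extension), with weak curl `cv`. -/
def MemH0Curl (Ω : Set Vec) (v cv : Vec → Vec) : Prop :=
  MemL2V Ω v ∧ MemL2V Ω cv ∧ WkCurlAll (zextV Ω v) (zextV Ω cv)
/-- `H₀(div,Ω)` (via zero extension), with weak divergence `d`. -/
def MemH0Div (Ω : Set Vec) (v : Vec → Vec) (d : Vec → ℝ) : Prop :=
  MemL2V Ω v ∧ MemL2S Ω d ∧ WkDivAll (zextV Ω v) (zextS Ω d)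
/-- vector `H₀¹(Ω;ℝ³)` (via zero extension), with weak Jacobian `J`. -/
def MemH01V (Ω : Set Vec) (v : Vec → Vec) (J : Vec → Mat) : Prop :=
  MemL2V Ω v ∧ (∀ a b, MemL2S Ω fun x => J x a b) ∧
    ∀ a b, WkPD b (zextS Ω fun x => v x a) (zextS Ω fun x => J x a b)
/-- `H₀(grad curl, Ω)`: `u ∈ H₀(curl)` with `curl u = cu ∈ H₀¹(Ω;ℝ³)`, `J = ∇cu`. -/
def MemH0GC (Ω : Set Vec) (u cu : Vec → Vec) (J : Vec → Mat) : Prop :=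
  MemH0Curl Ω u cu ∧ MemH01V Ω cu J

/-- membership in `H^j(Ω)` componentwise via iterated distributional derivatives `D`,
indexed by multi-indices `α : Fin j → Fin 3` and components `c : Fin 3`. -/
def MemHiter (Ω : Set Vec) (j : ℕ) (v : Vec → Vec)
    (D : (Fin j → Fin 3) → Fin 3 → Vec → ℝ) : Prop :=
  ∀ α c, WkIterIn Ω (List.ofFn α) (fun x => v x c) (D α c) ∧ MemL2S Ω (D α c)
/-- the `H^j(Ω)` seminorm built from the iterated derivatives `D`. -/
def semiIter (Ω : Set Vec) (j : ℕ) (D : (Fin j → Fin 3) → Fin 3 → Vec → ℝ) : ℝ :=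
  Real.sqrt (∑ α : Fin j → Fin 3, ∑ c : Fin 3, ∫ x in Ω, (D α c x) ^ 2)
/-- the `H¹(Ω)` seminorm of a vector field with Jacobian `J`. -/
def semiJ (Ω : Set Vec) (J : Vec → Mat) : ℝ := Real.sqrt (∫ x in Ω, nsqM (J x))

/-- the `H^s(Ω)` seminorm, `1 ≤ s ≤ 2`, of a vector field with Jacobian `J` and second
derivatives `D2`; for `1 < s < 2` the Sobolev–Slobodeckij seminorm of the gradient. -/
def semiHsVec (Ω : Set Vec) (s : ℝ) (J : Vec → Mat)
    (D2 : (Fin 2 → Fin 3) → Fin 3 → Vec → ℝ) : ℝ :=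
  if s = 1 then semiJ Ω J
  else if s = 2 then semiIter Ω 2 D2
  else Real.sqrt (∑ a : Fin 3, ∑ b : Fin 3,
    ∫ x in Ω, ∫ y in Ω, (J x a b - J y a b) ^ 2 / dist x y ^ (3 + 2 * (s - 1)))
/-- membership in `H^s(Ω;ℝ³)`, `1 ≤ s ≤ 2`, with data `(J, D2)`. -/
def MemHsVec (Ω : Set Vec) (s : ℝ) (v : Vec → Vec) (J : Vec → Mat)
    (D2 : (Fin 2 → Fin 3) → Fin 3 → Vec → ℝ) : Prop :=
  WkJacIn Ω v J ∧ (∀ a b, MemL2S Ω fun x => J x a b) ∧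
  (s = 2 → MemHiter Ω 2 v D2) ∧
  (1 < s → s < 2 → ∀ a b, Integrable
    (fun p : Vec × Vec => (J p.1 a b - J p.2 a b) ^ 2 / dist p.1 p.2 ^ (3 + 2 * (s - 1)))
    ((volume.restrict Ω).prod (volume.restrict Ω)))

/-! ### The continuous problems -/

/-- weak solution of the quad-curl singular perturbation problem
`ε² curl⁴u + curl²u = f`, `div u = 0`, `u × n = curl u = 0` on `∂Ω`
(mixed formulation with multiplier `λ = 0`): here `cu = curl u`, `J = ∇curl u`. -/
def IsQuadCurlSol (Ω : Set Vec) (ε : ℝ) (f u cu : Vec → Vec) (J : Vec → Mat) : Prop :=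
  MemH0GC Ω u cu J ∧ WkDivFree Ω u ∧
  ∀ v cv Jv, MemH0GC Ω v cv Jv →
    ε ^ 2 * (∫ x in Ω, dotM (J x) (Jv x)) + (∫ x in Ω, dot3 (cu x) (cv x))
      = ∫ x in Ω, dot3 (f x) (v x)

/-- weak solution of the reduced double curl problem
`curl²u₀ = f`, `div u₀ = 0`, `u₀ × n = 0` on `∂Ω`; here `cu0 = curl u₀`. -/
def IsReducedSol (Ω : Set Vec) (f u0 cu0 : Vec → Vec) : Prop :=
  MemH0Curl Ω u0 cu0 ∧ WkDivFree Ω u0 ∧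
  ∀ v cv, MemH0Curl Ω v cv →
    (∫ x in Ω, dot3 (cu0 x) (cv x)) = ∫ x in Ω, dot3 (f x) (v x)

/-- the continuous mixed formulation: `u ∈ H₀(grad curl)`, `λ ∈ H₀¹`,
`ε²a(u,v) + b(u,v) + c(v,λ) = (f,v)` and `c(u,μ) = 0`. -/
def MixedSol (Ω : Set Vec) (ε : ℝ) (f u cu : Vec → Vec) (J : Vec → Mat)
    (lam : Vec → ℝ) (glam : Vec → Vec) : Prop :=
  MemH0GC Ω u cu J ∧ MemH01S Ω lam glam ∧
  (∀ v cv Jv, MemH0GC Ω v cv Jv →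
    ε ^ 2 * (∫ x in Ω, dotM (J x) (Jv x)) + (∫ x in Ω, dot3 (cu x) (cv x))
      + (∫ x in Ω, dot3 (v x) (glam x)) = ∫ x in Ω, dot3 (f x) (v x)) ∧
  (∀ μ gμ, MemH01S Ω μ gμ → ∫ x in Ω, dot3 (u x) (gμ x) = 0)

/-! ### Discrete methods -/

/-- the mixed finite element method (4.1)-(4.2). -/
def DiscMixedSol (k : ℕ) (M : Mesh) (Ω : Set Vec) (ε : ℝ) (f : Vec → Vec)
    (u : DiscVF M) (lam : DiscSF M) : Prop :=
  MemWh0 k M Ω u ∧ MemVhg k M Ω lam ∧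
  (∀ v, MemWh0 k M Ω v → ε ^ 2 * ah M u v + bh M u v + ch M v lam = fpair M f v) ∧
  (∀ μ, MemVhg k M Ω μ → ch M u μ = 0)

/-- the Nitsche-modified mixed finite element method (5.1)-(5.2). -/
def DiscNitscheSol (k : ℕ) (M : Mesh) (Ω : Set Vec) (σ ε : ℝ) (f : Vec → Vec)
    (u : DiscVF M) (lam : DiscSF M) : Prop :=
  MemWh k M Ω u ∧ MemVhg k M Ω lam ∧
  (∀ v, MemWh k M Ω v →
    ε ^ 2 * atildeD σ M Ω u v + bh M u v + ch M v lam = fpair M f v) ∧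
  (∀ μ, MemVhg k M Ω μ → ch M u μ = 0)

/-! ### Falk–Winther projections and derived interpolation operators -/

/-- The Falk–Winther local bounded commuting projections onto the Lagrange, Nédélec and
BDM spaces, together with the properties used in the paper. `avg` plays the role of the
projection `Q_h` onto piecewise constants. -/
structure FW (k : ℕ) (M : Mesh) (Ω : Set Vec) where
  Ig : (Vec → ℝ) → DiscSF M
  IND : (Vec → Vec) → DiscVF M
  IBDM : (Vec → Vec) → DiscVF M
  mapsIg : ∀ v gv, MemH01S Ω v gv → MemVhg k M Ω (Ig v)
  mapsIND : ∀ v cv, MemH0Curl Ω v cv → MemVND k M Ω (IND v)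
  mapsIBDM : ∀ v dv, MemH0Div Ω v dv → MemVBDM M Ω (IBDM v)
  zeroIBDM : ∀ i x, IBDM (fun _ => (0 : Vec)) i x = 0
  comm_grad : ∀ v gv, MemH01S Ω v gv → ∀ i, ∀ x ∈ (M.el i).K, IND gv i x = grad3 (Ig v i) x
  comm_curl : ∀ v cv, MemH0Curl Ω v cv → ∀ i, ∀ x ∈ (M.el i).K, IBDM cv i x = curl3 (IND v i) x
  comm_div : ∀ v dv, MemH0Div Ω v dv → ∀ i, ∀ x ∈ (M.el i).K, div3 (IBDM v i) x = avg M dv i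

/-- DoF-matching conditions defining the interpolations `I_{h0}^d`, `I_h^d` into the
Tai–Winther spaces relative to a given piecewise field `B` (namely `I_h^{BDM}v`): the
normal face DoFs match, and on interior faces the tangential DoFs match the face average. -/
def MatchIdInt (M : Mesh) (B w : DiscVF M) : Prop :=
  (∀ i a, ∀ q, PolyDeg 1 q → faceNorMoment (M.el i) a (w i) q = faceNorMoment (M.el i) a (B i) q) ∧
  (∀ i j a b, i ≠ j → (M.el i).face a = (M.el j).face b →
    ∀ q, MemRT ((M.el i).outNormal a) q →
      faceTanMoment (M.el i) a (w i) q
        = (faceTanMoment (M.el i) a (B i) q + faceTanMoment (M.el i) a (B j) q) / 2)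

/-- `w = I_{h0}^d v` where `B = I_h^{BDM} v`. -/
def IsId0 (M : Mesh) (Ω : Set Vec) (B w : DiscVF M) : Prop :=
  MemVh0d M Ω w ∧ MatchIdInt M B w

/-- `w = I_h^d v` where `B = I_h^{BDM} v`: additionally the tangential DoFs on boundary
faces match those of `B`. -/
def IsId (M : Mesh) (Ω : Set Vec) (B w : DiscVF M) : Prop :=
  MemVhd M Ω w ∧ MatchIdInt M B w ∧
  ∀ i a, (M.el i).face a ⊆ frontier Ω →
    ∀ q, MemRT ((M.el i).outNormal a) q →
      faceTanMoment (M.el i) a (w i) q = faceTanMoment (M.el i) a (B i) q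

/-- DoF-matching conditions defining `I_{h0}^{gc}`, `I_h^{gc}` relative to a given
piecewise field `N` (namely `I_h^{ND}v`). -/
def MatchIgcInt (k : ℕ) (M : Mesh) (N w : DiscVF M) : Prop :=
  (∀ i a b, a ≠ b → ∀ q, PolyDeg k q →
     edgeMoment (M.el i) a b (w i) q = edgeMoment (M.el i) a b (N i) q) ∧
  (∀ i a, ∀ q, MemRM k ((M.el i).outNormal a) q →
     faceTanMoment (M.el i) a (w i) q = faceTanMoment (M.el i) a (N i) q) ∧
  (∀ i j a b, i ≠ j → (M.el i).face a = (M.el j).face b →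
    ∀ q, MemRT ((M.el i).outNormal a) q →
      faceTanMoment (M.el i) a (curl3 (w i)) q
        = (faceTanMoment (M.el i) a (curl3 (N i)) q + faceTanMoment (M.el i) a (curl3 (N j)) q) / 2)

/-- `w = I_{h0}^{gc} v` where `N = I_h^{ND} v`. -/
def IsIgc0 (k : ℕ) (M : Mesh) (Ω : Set Vec) (N w : DiscVF M) : Prop :=
  MemWh0 k M Ω w ∧ MatchIgcInt k M N w

/-- `w = I_h^{gc} v` where `N = I_h^{ND} v`. -/
def IsIgc (k : ℕ) (M : Mesh) (Ω : Set Vec) (N w : DiscVF M) : Prop :=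
  MemWh k M Ω w ∧ MatchIgcInt k M N w ∧
  ∀ i a, (M.el i).face a ⊆ frontier Ω →
    ∀ q, MemRT ((M.el i).outNormal a) q →
      faceTanMoment (M.el i) a (curl3 (w i)) q = faceTanMoment (M.el i) a (curl3 (N i)) q

/-- `B` maps `H₀(div,Ω)` into the BDM space. -/
def BDMmaps (M : Mesh) (Ω : Set Vec) (B : (Vec → Vec) → DiscVF M) : Prop :=
  ∀ v dv, MemH0Div Ω v dv → MemVBDM M Ω (B v)
/-- the Falk–Winther `L²`-bound `‖I_h^{BDM}v‖₀ ≲ ‖v‖₀ + h‖div v‖₀`. -/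
def BDMbound (M : Mesh) (Ω : Set Vec) (B : (Vec → Vec) → DiscVF M) (C₀ : ℝ) : Prop :=
  ∀ v dv, MemH0Div Ω v dv → L2d M (B v) ≤ C₀ * (L2VΩ Ω v + M.hsize * L2SΩ Ω dv)
/-- the elementwise Falk–Winther error estimates
`Σ_K h_K^{2(i-j)} |v - I_h^{BDM}v|²_{i,K} ≲ |v|_j²` for `i = 0,1`, `j = 1,2`. -/
def BDMest (M : Mesh) (Ω : Set Vec) (B : (Vec → Vec) → DiscVF M) (C₀ : ℝ) : Prop :=
  (∀ v dv Jv, MemH0Div Ω v dv → WkJacIn Ω v Jv →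
     (∑ i, (Metric.diam (M.el i).K) ^ (-2 : ℝ) * ∫ x in (M.el i).K, nsq3 (v x - B v i x))
       + (∑ i, ∫ x in (M.el i).K, nsqM (Jv x - jac3 (B v i) x)) ≤ C₀ * (semiJ Ω Jv) ^ 2) ∧
  (∀ v dv Jv D2, MemH0Div Ω v dv → WkJacIn Ω v Jv → MemHiter Ω 2 v D2 →
     (∑ i, (Metric.diam (M.el i).K) ^ (-4 : ℝ) * ∫ x in (M.el i).K, nsq3 (v x - B v i x))
       + (∑ i, (Metric.diam (M.el i).K) ^ (-2 : ℝ) * ∫ x in (M.el i).K, nsqM (Jv x - jac3 (B v i) x))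
       ≤ C₀ * (semiIter Ω 2 D2) ^ 2)

/-! ### Subspaces for the dimension count -/

/-- the subspace `∇P_{k+1}` of vector fields. -/
def gradSpace (k : ℕ) : Submodule ℝ (Vec → Vec) :=
  Submodule.span ℝ {v | ∃ q, PolyDeg (k + 1) q ∧ v = fun x => grad3 q x}
/-- the subspace `x × P₁(ℝ³;ℝ³)`. -/
def crossSpace : Submodule ℝ (Vec → Vec) :=
  Submodule.span ℝ {v | ∃ p, VPolyDeg 1 p ∧ v = fun x => cross3 x (p x)}
/-- the subspace `b_K P₁(ℝ³;ℝ³)`. -/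
def bubbleSpace (T : Tetra) : Submodule ℝ (Vec → Vec) :=
  Submodule.span ℝ {v | ∃ b r, T.IsBubble b ∧ VPolyDeg 1 r ∧ v = fun x => b x • r x}

theorem haus_param {E : Type*} [NormedAddCommGroup E] [NormedSpace ℝ E] [FiniteDimensional ℝ E]
    [MeasureSpace E] [BorelSpace E] [(volume : Measure E).IsAddHaarMeasure]
    (d : ℝ) (hd : 0 ≤ d) (h : (μH[d] : Measure E) = volume) (L : E →ₗ[ℝ] Vec)
    (hL : Function.Injective L) (p : Vec) :
    ∃ c : ℝ, c ≠ 0 ∧ ∀ (S : Set E) (g : Vec → ℝ),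
      ∫ x in (fun s => p + L s) '' S, g x ∂μH[d] = c * ∫ s in S, g (p + L s) := by
  obtain ⟨K, hK, hanti⟩ := L.exists_antilipschitzWith (LinearMap.ker_eq_bot.2 hL)
  set L' : E →L[ℝ] Vec := LinearMap.toContinuousLinearMap L with hL'
  have hLip : LipschitzWith ‖L'‖₊ L := L'.lipschitz
  have hcl : Topology.IsClosedEmbedding (fun s => p + L s) := by
    have h1 : Topology.IsClosedEmbedding L := hanti.isClosedEmbedding hLip.uniformContinuous
    exact (Homeomorph.addLeft p).isClosedEmbedding.comp h1
  have hme : MeasurableEmbedding (fun s => p + L s) := hcl.measurableEmbedding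
  set ν : Measure E := Measure.comap (fun s => p + L s) (μH[d]) with hν
  have himg : ∀ A : Set E, μH[d] ((fun s => p + L s) '' A) = μH[d] (L '' A) := by
    intro A
    have : (fun s => p + L s) '' A = (IsometryEquiv.addLeft p) '' (L '' A) := by
      rw [Set.image_image]; rfl
    rw [this, IsometryEquiv.hausdorffMeasure_image]
  have hνa : ∀ A : Set E, ν A = μH[d] (L '' A) := by
    intro A
    rw [hν, hme.comap_apply, himg]
  have hup : ∀ A : Set E, ν A ≤ (‖L'‖₊ : ENNReal) ^ d * volume A := by
    intro A
    rw [hνa, ← h]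
    exact hLip.hausdorffMeasure_image_le hd A
  have hlow : ∀ A : Set E, volume A ≤ (K : ENNReal) ^ d * ν A := by
    intro A
    rw [hνa, ← h]
    exact hanti.le_hausdorffMeasure_image hd A
  have : ν.IsAddHaarMeasure :=
    { lt_top_of_isCompact := by
        intro A hA
        refine (hup A).trans_lt ?_
        exact ENNReal.mul_lt_top (ENNReal.rpow_lt_top_of_nonneg hd (by simp)) hA.measure_lt_top
      map_add_left_eq_self := by
        intro t
        ext A hA
        rw [Measure.map_apply (measurable_const_add t) hA, hνa, hνa]
        have : L '' A = (IsometryEquiv.addLeft (L t)) '' (L '' ((fun x => t + x) ⁻¹' A)) := by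
          ext y; constructor
          · rintro ⟨x, hx, rfl⟩
            exact ⟨L (-t + x), ⟨_, by simpa using hx, rfl⟩, by simp⟩
          · rintro ⟨_, ⟨x, hx, rfl⟩, rfl⟩
            exact ⟨t + x, hx, by simp⟩
        rw [this, IsometryEquiv.hausdorffMeasure_image]
      open_pos := by
        intro U hU hne h0
        have := hlow U
        rw [h0, mul_zero] at this
        exact (hU.measure_pos volume hne).ne' (le_antisymm this bot_le) }
  have hs := Measure.isAddLeftInvariant_eq_smul ν (volume : Measure E)
  set c := Measure.addHaarScalarFactor ν (volume : Measure E) with hc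
  have hc0 : c ≠ 0 := (Measure.addHaarScalarFactor_pos_of_isAddHaarMeasure ν volume).ne'
  refine ⟨c, by exact_mod_cast hc0, ?_⟩
  intro S g
  have h1 : Measure.map (fun s => p + L s) ν = (μH[d]).restrict (Set.range fun s => p + L s) :=
    hme.map_comap _
  have h2 := hme.setIntegral_map (μ := ν) g ((fun s => p + L s) '' S)
  rw [h1, Set.preimage_image_eq _ hme.injective,
    Measure.restrict_restrict_of_subset (Set.image_subset_range _ _)] at h2
  rw [h2, hs, Measure.restrict_smul, integral_smul_nnreal_measure]
  rfl

theorem pd_poly_hasFDeriv (p : MvPolynomial (Fin 3) ℝ) (x : Vec) :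
    HasFDerivAt (fun y : Vec => MvPolynomial.eval y p)
      (∑ i, (MvPolynomial.eval x (MvPolynomial.pderiv i p)) •
        (ContinuousLinearMap.proj i : Vec →L[ℝ] ℝ)) x := by
  induction p using MvPolynomial.induction_on with
  | C a => simpa using hasFDerivAt_const a x
  | add p q hp hq =>
    simp only [map_add, add_smul, Finset.sum_add_distrib]
    exact hp.add hq
  | mul_X p n hp =>
    have := hp.mul ((ContinuousLinearMap.proj n : Vec →L[ℝ] ℝ).hasFDerivAt (x := x))
    simp only [map_mul, MvPolynomial.eval_X]
    refine this.congr_fderiv ?_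
    ext v
    simp [Derivation.leibniz, MvPolynomial.pderiv_X, add_mul, Finset.sum_add_distrib, Pi.single_apply,
      Finset.mul_sum, mul_add, ite_mul, mul_ite, apply_ite]
    refine Finset.sum_congr rfl fun i _ => ?_
    ring

theorem pd_poly (i : Fin 3) (p : MvPolynomial (Fin 3) ℝ) (x : Vec) :
    pd i (fun y : Vec => MvPolynomial.eval y p) x = MvPolynomial.eval x (MvPolynomial.pderiv i p) := by
  unfold pd
  rw [(pd_poly_hasFDeriv p x).fderiv]
  simp [Pi.single_apply]

theorem deg_pderiv (i : Fin 3) (p : MvPolynomial (Fin 3) ℝ) (n : ℕ) (h : p.totalDegree ≤ n + 1) :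
    (MvPolynomial.pderiv i p).totalDegree ≤ n := by
  rw [p.as_sum, map_sum]
  refine MvPolynomial.totalDegree_finsetSum_le fun s hs => ?_
  rw [MvPolynomial.pderiv_monomial]
  by_cases h0 : s i = 0
  · simp [h0]
  · refine (MvPolynomial.totalDegree_monomial_le _ _).trans ?_
    have h1 := (MvPolynomial.le_totalDegree hs).trans h
    have h2 : (s.sum fun _ e => e) = ∑ j, s j := Finsupp.sum_fintype _ _ (by simp)
    have h3 : ((s - Finsupp.single i 1).sum fun _ => id) = ∑ j, (s - Finsupp.single i 1 : Fin 3 →₀ ℕ) j :=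
      Finsupp.sum_fintype _ _ (by simp)
    rw [h2] at h1
    rw [h3]
    clear h2 h3
    simp only [Fin.sum_univ_three, Finsupp.tsub_apply, Finsupp.single_apply] at h1 ⊢
    fin_cases i <;> simp_all <;> omega

theorem pderiv_swap (i j : Fin 3) (p : MvPolynomial (Fin 3) ℝ) :
    MvPolynomial.pderiv i (MvPolynomial.pderiv j p) = MvPolynomial.pderiv j (MvPolynomial.pderiv i p) := by
  have : ⁅(MvPolynomial.pderiv i : Derivation ℝ (MvPolynomial (Fin 3) ℝ) (MvPolynomial (Fin 3) ℝ)), MvPolynomial.pderiv j⁆ = (0 : Derivation ℝ (MvPolynomial (Fin 3) ℝ) (MvPolynomial (Fin 3) ℝ)) := by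
    apply MvPolynomial.derivation_ext
    intro k
    rw [Derivation.commutator_apply]
    simp [MvPolynomial.pderiv_X, Pi.single_apply, apply_ite]
  have h := congrArg (fun D => D p) this
  simp only [Derivation.commutator_apply, Derivation.zero_apply] at h
  exact sub_eq_zero.1 h

theorem pd_polyDeg {n : ℕ} {f : Vec → ℝ} (h : PolyDeg (n + 1) f) (i : Fin 3) : PolyDeg n (pd i f) := by
  obtain ⟨p, hp, hf⟩ := h
  obtain rfl : f = fun x => MvPolynomial.eval x p := funext hf
  exact ⟨MvPolynomial.pderiv i p, deg_pderiv i p n hp, fun x => pd_poly i p x⟩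

theorem PolyDeg.differentiable {n : ℕ} {f : Vec → ℝ} (h : PolyDeg n f) : Differentiable ℝ f := by
  obtain ⟨p, hp, hf⟩ := h
  obtain rfl : f = fun x => MvPolynomial.eval x p := funext hf
  exact fun x => (pd_poly_hasFDeriv p x).differentiableAt

theorem PolyDeg.cont {n : ℕ} {f : Vec → ℝ} (h : PolyDeg n f) : Continuous f :=
  h.differentiable.continuous

theorem PolyDeg.mono {n m : ℕ} {f : Vec → ℝ} (h : PolyDeg n f) (hnm : n ≤ m) : PolyDeg m f := by
  obtain ⟨p, hp, hf⟩ := h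
  exact ⟨p, hp.trans hnm, hf⟩

theorem PolyDeg.add {n : ℕ} {f g : Vec → ℝ} (hf : PolyDeg n f) (hg : PolyDeg n g) :
    PolyDeg n (fun x => f x + g x) := by
  obtain ⟨p, hp, hf⟩ := hf
  obtain ⟨q, hq, hg⟩ := hg
  exact ⟨p + q, (MvPolynomial.totalDegree_add _ _).trans (max_le hp hq), fun x => by simp [hf, hg]⟩

theorem PolyDeg.sub {n : ℕ} {f g : Vec → ℝ} (hf : PolyDeg n f) (hg : PolyDeg n g) :
    PolyDeg n (fun x => f x - g x) := by
  obtain ⟨p, hp, hf⟩ := hf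
  obtain ⟨q, hq, hg⟩ := hg
  exact ⟨p - q, (MvPolynomial.totalDegree_sub _ _).trans (max_le hp hq), fun x => by simp [hf, hg]⟩

theorem PolyDeg.mul {n m : ℕ} {f g : Vec → ℝ} (hf : PolyDeg n f) (hg : PolyDeg m g) :
    PolyDeg (n + m) (fun x => f x * g x) := by
  obtain ⟨p, hp, hf⟩ := hf
  obtain ⟨q, hq, hg⟩ := hg
  exact ⟨p * q, (MvPolynomial.totalDegree_mul _ _).trans (by omega), fun x => by simp [hf, hg]⟩

theorem polyDeg_const (n : ℕ) (c : ℝ) : PolyDeg n (fun _ => c) :=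
  ⟨MvPolynomial.C c, by simp, fun x => by simp⟩

theorem polyDeg_coord (i : Fin 3) : PolyDeg 1 (fun x => x i) :=
  ⟨MvPolynomial.X i, by simp, fun x => by simp⟩

theorem PolyDeg.cmul {n : ℕ} {f : Vec → ℝ} (c : ℝ) (hf : PolyDeg n f) :
    PolyDeg n (fun x => c * f x) := by
  simpa using (polyDeg_const 0 c).mul hf

theorem PolyDeg.mulc {n : ℕ} {f : Vec → ℝ} (hf : PolyDeg n f) (c : ℝ) :
    PolyDeg n (fun x => f x * c) := by
  simpa using hf.mul (polyDeg_const 0 c)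

theorem polyDeg_decomp (n : ℕ) (f : Vec → ℝ) (h : PolyDeg (n + 1) f) :
    ∃ (c : ℝ) (g : Fin 3 → Vec → ℝ), (∀ i, PolyDeg n (g i)) ∧ ∀ x, f x = c + ∑ i, x i * g i x := by
  obtain ⟨p, hp, hf⟩ := h
  obtain rfl : f = fun x => MvPolynomial.eval x p := funext hf
  clear hf
  have key : ∀ S : Finset (Fin 3 →₀ ℕ), (∀ s ∈ S, (s.sum fun _ e => e) ≤ n + 1) →
      ∃ (c : ℝ) (g : Fin 3 → Vec → ℝ), (∀ i, PolyDeg n (g i)) ∧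
        ∀ x, MvPolynomial.eval x (∑ s ∈ S, MvPolynomial.monomial s (p.coeff s)) = c + ∑ i, x i * g i x := by
    intro S
    induction S using Finset.induction_on with
    | empty => intro _; exact ⟨0, fun _ _ => 0, fun _ => polyDeg_const n 0, by simp⟩
    | insert s S hs ih =>
      intro hS
      obtain ⟨c, g, hg, hx⟩ := ih fun t ht => hS t (Finset.mem_insert_of_mem ht)
      have hsd := hS s (Finset.mem_insert_self _ _)
      by_cases h0 : s = 0
      · subst h0
        refine ⟨p.coeff 0 + c, g, hg, fun x => ?_⟩
        rw [Finset.sum_insert hs, map_add, hx]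
        simp [add_assoc]
      · obtain ⟨i, hi⟩ : ∃ i, s i ≠ 0 := by
          by_contra hcon
          push Not at hcon
          exact h0 (Finsupp.ext hcon)
        set s' := s - Finsupp.single i 1 with hs'
        have hss : s = Finsupp.single i 1 + s' := by
          ext j
          simp only [hs', Finsupp.add_apply, Finsupp.tsub_apply, Finsupp.single_apply]
          split_ifs with hij
          · subst hij; omega
          · omega
        have hd : (s'.sum fun _ e => e) ≤ n := by
          rw [hss] at hsd
          rw [Finsupp.sum_add_index' (by simp) (by simp)] at hsd
          simp at hsd
          omega
        refine ⟨c, fun j x => g j x + (if j = i then 1 else 0) * MvPolynomial.eval x (MvPolynomial.monomial s' (p.coeff s)), fun j => ?_, fun x => ?_⟩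
        · refine (hg j).add (PolyDeg.cmul _ ⟨_, ?_, fun x => rfl⟩)
          exact (MvPolynomial.totalDegree_monomial_le _ _).trans hd
        · rw [Finset.sum_insert hs, map_add, hx]
          have : MvPolynomial.monomial s (p.coeff s) = MvPolynomial.X i * MvPolynomial.monomial s' (p.coeff s) := by
            conv_lhs => rw [hss]
            rw [MvPolynomial.X, MvPolynomial.monomial_mul, one_mul, ← hss]
          rw [this]
          simp [mul_add, Finset.sum_add_distrib]
          ring
  have := key p.support (fun s hs => (MvPolynomial.le_totalDegree hs).trans hp)
  rwa [← p.as_sum] at this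

theorem polyDeg_zero (f : Vec → ℝ) (h : PolyDeg 0 f) : ∃ c, ∀ x, f x = c := by
  obtain ⟨p, hp, hf⟩ := h
  have := (MvPolynomial.totalDegree_eq_zero_iff_eq_C (p := p)).1 (by omega)
  exact ⟨p.coeff 0, fun x => by rw [hf, this]; simp⟩

theorem polyDeg_one (f : Vec → ℝ) (h : PolyDeg 1 f) : ∃ (c : ℝ) (g : Vec), ∀ x, f x = c + dot3 g x := by
  obtain ⟨c, g, hg, hx⟩ := polyDeg_decomp 0 f h
  choose g' hg' using fun i => polyDeg_zero _ (hg i)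
  exact ⟨c, g', fun x => by rw [hx]; simp [dot3, hg', mul_comm]⟩

theorem polyDeg_two (f : Vec → ℝ) (h : PolyDeg 2 f) :
    ∃ (c : ℝ) (g : Vec) (A : Fin 3 → Vec), ∀ x, f x = c + dot3 g x + ∑ i, x i * dot3 (A i) x := by
  obtain ⟨c, g, hg, hx⟩ := polyDeg_decomp 1 f h
  choose c' g' hg' using fun i => polyDeg_one _ (hg i)
  refine ⟨c, c', g', fun x => ?_⟩
  rw [hx]
  simp only [hg', mul_add, Finset.sum_add_distrib, dot3]
  simp [mul_comm, add_assoc]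

/-- quadratic interpolation -/
theorem polyDeg_two_interp {ι : Type*} [Fintype ι] (f : Vec → ℝ) (h : PolyDeg 2 f) (v : ι → Vec) (l : ι → ℝ)
    (hl : ∑ a, l a = 1) :
    f (∑ a, l a • v a) = 2 * ∑ a, ∑ b, l a * l b * f ((1/2 : ℝ) • (v a + v b)) - ∑ a, l a * f (v a) := by
  obtain ⟨c, g, A, hx⟩ := polyDeg_two f h
  have h1 : ∀ i, (∑ a, l a • v a) i = ∑ a, l a * v a i := by intro i; simp
  have hlb : ∀ X : ι → ℝ, ∑ a, ∑ b, l a * l b * X a = ∑ a, l a * X a := by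
    intro X
    refine Finset.sum_congr rfl fun a _ => ?_
    have : ∀ b, l a * l b * X a = l a * X a * l b := fun b => by ring
    simp only [this, ← Finset.mul_sum, hl, mul_one]
  have hlb' : ∀ X : ι → ℝ, ∑ a, ∑ b, l a * l b * X b = ∑ a, l a * X a := by
    intro X
    rw [Finset.sum_comm, ← hlb X]
    exact Finset.sum_congr rfl fun a _ => Finset.sum_congr rfl fun b _ => by ring
  have hlin : ∀ g : Vec, dot3 g (∑ a, l a • v a) = ∑ a, l a * dot3 g (v a) := by
    intro g
    simp only [dot3, h1, Finset.mul_sum]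
    rw [Finset.sum_comm]
    exact Finset.sum_congr rfl fun a _ => Finset.sum_congr rfl fun b _ => by ring
  have hdm : ∀ g x y, dot3 g ((1/2 : ℝ) • (x + y)) = (dot3 g x + dot3 g y) / 2 := by
    intro g x y; simp [dot3, Fin.sum_univ_three]; ring
  have hmid : ∀ a b, f ((1/2 : ℝ) • (v a + v b)) = c + dot3 g (v a) / 2 + dot3 g (v b) / 2
      + (∑ i, v a i * dot3 (A i) (v a)) / 4 + (∑ i, v b i * dot3 (A i) (v b)) / 4
      + ∑ i, (v a i * dot3 (A i) (v b)) / 4 + ∑ i, (v b i * dot3 (A i) (v a)) / 4 := by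
    intro a b
    rw [hx]
    simp only [hdm]
    simp [Fin.sum_univ_three]
    ring
  have hquad : ∑ i, (∑ a, l a • v a) i * dot3 (A i) (∑ a, l a • v a)
      = ∑ a, ∑ b, l a * l b * ∑ i, v a i * dot3 (A i) (v b) := by
    simp only [hlin, h1, Finset.sum_mul_sum]
    simp only [Finset.mul_sum]
    rw [Finset.sum_comm]
    refine Finset.sum_congr rfl fun a _ => ?_
    rw [Finset.sum_comm]
    exact Finset.sum_congr rfl fun a _ => Finset.sum_congr rfl fun b _ => by ring
  have hquad' : ∑ i, (∑ a, l a • v a) i * dot3 (A i) (∑ a, l a • v a)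
      = ∑ a, ∑ b, l a * l b * ∑ i, v b i * dot3 (A i) (v a) := by
    rw [hquad, Finset.sum_comm]
    exact Finset.sum_congr rfl fun a _ => Finset.sum_congr rfl fun b _ => by ring
  have hc : ∑ a, ∑ b, l a * l b * c = c := by rw [hlb (fun _ => c), ← Finset.sum_mul, hl, one_mul]
  have e1 := hlb (fun a => dot3 g (v a))
  have e2 := hlb' (fun a => dot3 g (v a))
  have e3 := hlb (fun a => ∑ i, v a i * dot3 (A i) (v a))
  have e4 := hlb' (fun a => ∑ i, v a i * dot3 (A i) (v a))
  have hsum : ∑ a, ∑ b, l a * l b * f ((1/2 : ℝ) • (v a + v b)) =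
      (∑ a, ∑ b, l a * l b * c) + (∑ a, ∑ b, l a * l b * dot3 g (v a)) / 2
      + (∑ a, ∑ b, l a * l b * dot3 g (v b)) / 2
      + (∑ a, ∑ b, l a * l b * ∑ i, v a i * dot3 (A i) (v a)) / 4
      + (∑ a, ∑ b, l a * l b * ∑ i, v b i * dot3 (A i) (v b)) / 4
      + (∑ a, ∑ b, l a * l b * ∑ i, v a i * dot3 (A i) (v b)) / 4
      + (∑ a, ∑ b, l a * l b * ∑ i, v b i * dot3 (A i) (v a)) / 4 := by
    simp only [hmid, Finset.sum_div, ← Finset.sum_add_distrib]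
    refine Finset.sum_congr rfl fun a _ => Finset.sum_congr rfl fun b _ => ?_
    simp only [Fin.sum_univ_three]
    ring
  have hv : ∑ a, l a * f (v a) = c + (∑ a, l a * dot3 g (v a)) + ∑ a, l a * ∑ i, v a i * dot3 (A i) (v a) := by
    simp only [hx, mul_add, Finset.sum_add_distrib, ← Finset.sum_mul, hl, one_mul]
  rw [hsum, hv, hc, e1, e2, e3, e4, ← hquad, ← hquad', hx, hlin]
  ring

theorem polyDeg_one_interp {ι : Type*} [Fintype ι] (f : Vec → ℝ) (h : PolyDeg 1 f) (v : ι → Vec) (l : ι → ℝ)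
    (hl : ∑ a, l a = 1) : f (∑ a, l a • v a) = ∑ a, l a * f (v a) := by
  obtain ⟨c, g, hx⟩ := polyDeg_one f h
  simp only [hx, mul_add, Finset.sum_add_distrib, ← Finset.sum_mul, hl, one_mul, dot3, Finset.mul_sum]
  congr 1
  rw [Finset.sum_comm]
  refine Finset.sum_congr rfl fun i _ => ?_
  simp [Finset.mul_sum]
  exact Finset.sum_congr rfl fun b _ => by ring


def Tri : Set (ℝ × ℝ) := {s | 0 ≤ s.1 ∧ 0 ≤ s.2 ∧ s.1 + s.2 ≤ 1}

theorem tri_closed : IsClosed Tri := by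
  refine (isClosed_le continuous_const continuous_fst).inter
    ((isClosed_le continuous_const continuous_snd).inter
      (isClosed_le (continuous_fst.add continuous_snd) continuous_const))

theorem tri_compact : IsCompact Tri := by
  refine (isCompact_Icc (a := (0 : ℝ × ℝ)) (b := 1)).of_isClosed_subset tri_closed ?_
  rintro ⟨a, b⟩ ⟨h1, h2, h3⟩
  simp only at h1 h2 h3
  exact ⟨⟨h1, h2⟩, ⟨by simp; linarith, by simp; linarith⟩⟩

theorem tri_convex : Convex ℝ Tri := by
  rintro ⟨a, b⟩ ⟨h1, h2, h3⟩ ⟨c, d⟩ ⟨h4, h5, h6⟩ u v hu hv huv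
  simp only at h1 h2 h3 h4 h5 h6
  refine ⟨?_, ?_, ?_⟩ <;> simp
  · positivity
  · positivity
  · nlinarith

theorem tri_sub : Tri ⊆ closure (interior Tri) := by
  rw [tri_convex.closure_interior_eq_closure_of_nonempty_interior]
  · exact subset_closure
  · refine ⟨(1/4, 1/4), ?_⟩
    have ho : IsOpen {s : ℝ × ℝ | 0 < s.1 ∧ 0 < s.2 ∧ s.1 + s.2 < 1} :=
      (isOpen_lt continuous_const continuous_fst).inter
        ((isOpen_lt continuous_const continuous_snd).inter
          (isOpen_lt (continuous_fst.add continuous_snd) continuous_const))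
    refine interior_maximal ?_ ho (by norm_num)
    rintro s ⟨h1, h2, h3⟩
    exact ⟨h1.le, h2.le, h3.le⟩

theorem tri_int {f : ℝ × ℝ → ℝ} (hf : Continuous f) : IntegrableOn f Tri :=
  hf.continuousOn.integrableOn_compact tri_compact

theorem sq_zero_of_int {E : Type*} [TopologicalSpace E] [MeasureSpace E] [BorelSpace E]
    [(volume : Measure E).IsOpenPosMeasure] [IsFiniteMeasureOnCompacts (volume : Measure E)]
    [T2Space E]
    {S : Set E} (hS : IsCompact S) (hS' : S ⊆ closure (interior S)) (f : E → ℝ) (hf : Continuous f)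
    (h : ∫ s in S, f s * f s = 0) : ∀ s ∈ S, f s = 0 := by
  have hff : Continuous fun s => f s * f s := hf.mul hf
  rw [integral_eq_zero_iff_of_nonneg (fun s => mul_self_nonneg _)
    (hff.continuousOn.integrableOn_compact hS)] at h
  have := Measure.eqOn_of_ae_eq h hff.continuousOn continuousOn_const hS'
  intro s hs
  have h2 := this hs
  simpa using h2

theorem tri_iter {f : ℝ × ℝ → ℝ} (hf : Continuous f) :
    ∫ s in Tri, f s = ∫ s in (0:ℝ)..1, ∫ t in (0:ℝ)..(1 - s), f (s, t) := by
  rw [← integral_indicator tri_closed.measurableSet, Measure.volume_eq_prod,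
    integral_prod _ ((integrable_indicator_iff tri_closed.measurableSet).2
      (by simpa [Measure.volume_eq_prod] using tri_int hf))]
  rw [intervalIntegral.integral_of_le zero_le_one, ← integral_Icc_eq_integral_Ioc,
    ← integral_indicator measurableSet_Icc]
  congr 1
  ext s
  by_cases hs : s ∈ Set.Icc (0:ℝ) 1
  · rw [Set.indicator_of_mem hs, intervalIntegral.integral_of_le (by linarith [hs.2]),
      ← integral_Icc_eq_integral_Ioc, ← integral_indicator measurableSet_Icc]
    congr 1
    ext t
    by_cases ht : t ∈ Set.Icc (0:ℝ) (1 - s)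
    · rw [Set.indicator_of_mem ht, Set.indicator_of_mem]
      exact ⟨hs.1, ht.1, by simp; linarith [ht.2]⟩
    · rw [Set.indicator_of_notMem ht, Set.indicator_of_notMem]
      rintro ⟨h1, h2, h3⟩
      simp only at h1 h2 h3
      exact ht ⟨h2, by linarith⟩
  · rw [Set.indicator_of_notMem hs]
    have : ∀ t, Tri.indicator f (s, t) = 0 := by
      intro t
      refine Set.indicator_of_notMem ?_ _
      rintro ⟨h1, h2, h3⟩
      simp only at h1 h2 h3
      exact hs ⟨h1, by linarith⟩
    simp [this]

theorem tri_mono (a b : ℕ) : ∫ s in Tri, s.1 ^ a * s.2 ^ b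
    = (a.factorial * b.factorial : ℝ) / ((a + b + 2).factorial : ℝ) := by
  have key : ∀ b a : ℕ, ∫ s in (0:ℝ)..1, s ^ a * (1 - s) ^ b = (a.factorial * b.factorial : ℝ) / ((a + b + 1).factorial : ℝ) := by
    intro b
    induction b with
    | zero =>
      intro a
      simp [Nat.factorial_succ]
      field_simp
    | succ b ih =>
      intro a
      have hib := intervalIntegral.integral_mul_deriv_eq_deriv_mul (a := (0:ℝ)) (b := 1)
        (u := fun s => (1 - s) ^ (b + 1)) (u' := fun s => -((b + 1 : ℝ) * (1 - s) ^ b))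
        (v := fun s => s ^ (a + 1) / (a + 1 : ℝ)) (v' := fun s => s ^ a)
        (fun s _ => by
          have := ((hasDerivAt_id s).const_sub 1).pow (b + 1)
          exact this.congr_deriv (by simp))
        (fun s _ => by
          have := (hasDerivAt_pow (a + 1) s).div_const (a + 1 : ℝ)
          refine this.congr_deriv ?_
          have : (a + 1 : ℝ) ≠ 0 := by positivity
          push_cast
          field_simp)
        (by apply Continuous.intervalIntegrable; fun_prop) (by apply Continuous.intervalIntegrable; fun_prop)
      have e1 : ∫ s in (0:ℝ)..1, s ^ a * (1 - s) ^ (b + 1) = ∫ s in (0:ℝ)..1, (1 - s) ^ (b + 1) * s ^ a := by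
        congr 1; ext s; ring
      rw [e1, hib]
      have e2 : ∀ s : ℝ, -((b + 1 : ℝ) * (1 - s) ^ b) * (s ^ (a + 1) / (a + 1 : ℝ))
          = (-((b + 1 : ℝ) / (a + 1))) * (s ^ (a + 1) * (1 - s) ^ b) := by
        intro s; field_simp
      simp only [e2]
      rw [intervalIntegral.integral_const_mul, ih]
      have : a + 1 + b + 1 = a + (b + 1) + 1 := by ring
      rw [this]
      simp [Nat.factorial_succ a, Nat.factorial_succ b]
      field_simp
  rw [tri_iter (by fun_prop)]
  have e : ∀ s : ℝ, ∫ t in (0:ℝ)..(1 - s), s ^ a * t ^ b = (1 / (b + 1 : ℝ)) * (s ^ a * (1 - s) ^ (b + 1)) := by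
    intro s
    rw [intervalIntegral.integral_const_mul, integral_pow]
    simp
    ring
  simp only [e]
  rw [intervalIntegral.integral_const_mul, key]
  have : a + (b + 1) + 1 = a + b + 2 := by ring
  rw [this]
  simp [Nat.factorial_succ b]
  field_simp

theorem tri_dir (c : ℕ) : ∀ a b : ℕ, ∫ s in Tri, (1 - s.1 - s.2) ^ c * s.1 ^ a * s.2 ^ b
    = (a.factorial * b.factorial * c.factorial : ℝ) / ((a + b + c + 2).factorial : ℝ) := by
  induction c with
  | zero => intro a b; simpa using tri_mono a b
  | succ c ih =>
    intro a b
    have e : ∀ s : ℝ × ℝ, (1 - s.1 - s.2) ^ (c + 1) * s.1 ^ a * s.2 ^ b =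
        (1 - s.1 - s.2) ^ c * s.1 ^ a * s.2 ^ b - (1 - s.1 - s.2) ^ c * s.1 ^ (a + 1) * s.2 ^ b
          - (1 - s.1 - s.2) ^ c * s.1 ^ a * s.2 ^ (b + 1) := by
      intro s; ring
    simp only [e]
    rw [integral_sub, integral_sub, ih, ih, ih]
    · have h1 : a + 1 + b + c + 2 = (a + b + c + 2) + 1 := by ring
      have h2 : a + (b + 1) + c + 2 = (a + b + c + 2) + 1 := by ring
      have h3 : a + b + (c + 1) + 2 = (a + b + c + 2) + 1 := by ring
      rw [h1, h2, h3, Nat.factorial_succ (a + b + c + 2), Nat.factorial_succ a, Nat.factorial_succ b,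
        Nat.factorial_succ c]
      have : ((a + b + c + 2).factorial : ℝ) ≠ 0 := by positivity
      push_cast
      field_simp
      ring
    all_goals apply tri_int; fun_prop

/-- barycentric coordinates on the reference triangle -/
def bl (s : ℝ × ℝ) : Fin 3 → ℝ := ![1 - s.1 - s.2, s.1, s.2]

theorem tri_lin {n : ℕ} (X : Fin n → ℝ) (e : Fin n → Fin 3 → ℕ) :
    ∫ s in Tri, ∑ k, X k * (bl s 0 ^ e k 0 * bl s 1 ^ e k 1 * bl s 2 ^ e k 2) =
      ∑ k, X k * (((e k 1).factorial * (e k 2).factorial * (e k 0).factorial : ℝ) /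
        ((e k 1 + e k 2 + e k 0 + 2).factorial : ℝ)) := by
  rw [integral_finsetSum]
  · refine Finset.sum_congr rfl fun k _ => ?_
    rw [integral_const_mul]
    congr 1
    exact tri_dir (e k 0) (e k 1) (e k 2)
  · intro k _
    apply tri_int
    simp only [bl]
    simp
    fun_prop

theorem tri_tw (X : Fin 3 → Fin 3 → ℝ) :
    ∫ s in Tri, bl s 0 * bl s 1 * bl s 2 * ∑ m, ∑ l, bl s m * bl s l * X m l =
      (2 * (X 0 1 + X 0 2 + X 1 0 + X 1 2 + X 2 0 + X 2 1) + 3 * (X 0 0 + X 1 1 + X 2 2)) / 2520 := by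
  have h := tri_lin ![X 0 0, X 1 1, X 2 2, X 0 1 + X 1 0, X 0 2 + X 2 0, X 1 2 + X 2 1]
    ![![3,1,1], ![1,3,1], ![1,1,3], ![2,2,1], ![2,1,2], ![1,2,2]]
  refine Eq.trans (Eq.trans ?_ h) ?_
  · congr 1
    ext s
    simp [Fin.sum_univ_succ]
    ring
  · simp [Fin.sum_univ_succ, Nat.factorial]
    ring

theorem tri_nd1 (A B C : ℝ) :
    ∫ s in Tri, (bl s 0 * bl s 1 * A + bl s 0 * bl s 2 * B + bl s 1 * bl s 2 * C) = (A + B + C) / 24 := by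
  have h := tri_lin ![A, B, C] ![![1,1,0], ![1,0,1], ![0,1,1]]
  refine Eq.trans (Eq.trans ?_ h) ?_
  · congr 1
    ext s
    simp [Fin.sum_univ_succ]
    ring
  · simp [Fin.sum_univ_succ, Nat.factorial]
    ring

theorem tri_nd2 (A B C : Fin 3 → ℝ) :
    ∫ s in Tri, (bl s 0 * bl s 1 * (∑ l, bl s l * A l) + bl s 0 * bl s 2 * (∑ l, bl s l * B l)
      + bl s 1 * bl s 2 * (∑ l, bl s l * C l)) =
      (2 * (A 0 + A 1 + B 0 + B 2 + C 1 + C 2) + A 2 + B 1 + C 0) / 120 := by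
  have h := tri_lin ![A 0, A 1, B 0, B 2, C 1, C 2, A 2 + B 1 + C 0]
    ![![2,1,0], ![1,2,0], ![2,0,1], ![1,0,2], ![0,2,1], ![0,1,2], ![1,1,1]]
  refine Eq.trans (Eq.trans ?_ h) ?_
  · congr 1
    ext s
    simp [Fin.sum_univ_succ]
    ring
  · simp [Fin.sum_univ_succ, Nat.factorial]
    ring


theorem dot3_add_right (u v w : Vec) : dot3 u (v + w) = dot3 u v + dot3 u w := by
  simp [dot3, Fin.sum_univ_three]; ring
theorem dot3_sub_right (u v w : Vec) : dot3 u (v - w) = dot3 u v - dot3 u w := by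
  simp [dot3, Fin.sum_univ_three]; ring
theorem dot3_smul_right (c : ℝ) (u v : Vec) : dot3 u (c • v) = c * dot3 u v := by
  simp [dot3, Fin.sum_univ_three]; ring
theorem dot3_comm (u v : Vec) : dot3 u v = dot3 v u := by
  simp [dot3, Fin.sum_univ_three]; ring
theorem dot3_sum_right {ι : Type*} (S : Finset ι) (u : Vec) (f : ι → Vec) :
    dot3 u (∑ i ∈ S, f i) = ∑ i ∈ S, dot3 u (f i) := by
  simp only [dot3, Finset.sum_apply, Finset.mul_sum]
  rw [Finset.sum_comm]
theorem dot3_sum_left {ι : Type*} (S : Finset ι) (u : Vec) (f : ι → Vec) :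
    dot3 (∑ i ∈ S, f i) u = ∑ i ∈ S, dot3 (f i) u := by
  rw [dot3_comm, dot3_sum_right]
  exact Finset.sum_congr rfl fun i _ => dot3_comm _ _
theorem dot3_smul_left (c : ℝ) (u v : Vec) : dot3 (c • u) v = c * dot3 u v := by
  simp [dot3, Fin.sum_univ_three]; ring
theorem dot3_add_left (u v w : Vec) : dot3 (u + v) w = dot3 u w + dot3 v w := by
  simp [dot3, Fin.sum_univ_three]; ring
theorem dot3_sub_left (u v w : Vec) : dot3 (u - v) w = dot3 u w - dot3 v w := by
  simp [dot3, Fin.sum_univ_three]; ring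
theorem dot3_zero_left (u : Vec) : dot3 0 u = 0 := by simp [dot3]
theorem dot3_zero_right (u : Vec) : dot3 u 0 = 0 := by simp [dot3]
theorem dot3_self_eq_zero {u : Vec} (h : dot3 u u = 0) : u = 0 := by
  simp only [dot3, Fin.sum_univ_three] at h
  ext i
  fin_cases i <;> simp <;> nlinarith [sq_nonneg (u 0), sq_nonneg (u 1), sq_nonneg (u 2)]

/-- barycentric data with explicit gradients -/
structure BD (T : Tetra) (lam : Fin 4 → Vec → ℝ) (g : Fin 4 → Vec) : Prop where
  aff : ∀ i x y, lam i x = lam i y + dot3 (g i) (x - y)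
  vtx : ∀ i j, lam i (T.vtx j) = if i = j then (1 : ℝ) else 0
  sum : ∀ x, ∑ i, lam i x = 1
  repr : ∀ x, ∑ i, lam i x • T.vtx i = x
  poly : ∀ i, PolyDeg 1 (lam i)

theorem bd_exists (T : Tetra) (lam : Fin 4 → Vec → ℝ) (h : T.IsBary lam) : ∃ g, BD T lam g := by
  choose c g hg using fun i => polyDeg_one _ (h.1 i)
  have key : ∀ x, ∃ w : Fin 4 → ℝ, ∑ i, w i = 1 ∧ x = ∑ i, w i • T.vtx i := by
    intro x
    have htop : affineSpan ℝ (Set.range T.vtx) = ⊤ :=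
      T.indep.affineSpan_eq_top_iff_card_eq_finrank_add_one.2 (by simp)
    have hx : x ∈ affineSpan ℝ (Set.range T.vtx) := by rw [htop]; trivial
    obtain ⟨w, hw, hxw⟩ := eq_affineCombination_of_mem_affineSpan_of_fintype hx
    refine ⟨w, hw, ?_⟩
    rw [hxw, Finset.affineCombination_eq_linear_combination _ _ _ hw]
  have key2 : ∀ x (w : Fin 4 → ℝ), ∑ i, w i = 1 → x = ∑ i, w i • T.vtx i → ∀ j, lam j x = w j := by
    intro x w hw hx j
    rw [hx, polyDeg_one_interp _ (h.1 j) _ _ hw]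
    simp [h.2]
  refine ⟨g, ⟨?_, h.2, ?_, ?_, h.1⟩⟩
  · intro i x y
    rw [hg, hg, dot3_sub_right]; ring
  · intro x
    obtain ⟨w, hw, hx⟩ := key x
    rw [← hw]
    exact Finset.sum_congr rfl fun j _ => key2 x w hw hx j
  · intro x
    obtain ⟨w, hw, hx⟩ := key x
    conv_rhs => rw [hx]
    exact Finset.sum_congr rfl fun j _ => by rw [key2 x w hw hx j]

theorem BD.unique {T : Tetra} {lam lam' g g'} (h : BD T lam g) (h' : BD T lam' g') : lam = lam' := by
  ext i x
  have := polyDeg_one_interp _ (h'.poly i) T.vtx (fun j => lam j x) (h.sum x)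
  rw [h.repr x] at this
  simpa [h'.vtx] using this.symm

theorem BD.lam_comb {T : Tetra} {lam g} (h : BD T lam g) {ι : Type*} [Fintype ι] (w : ι → ℝ) (p : ι → Vec)
    (hw : ∑ i, w i = 1) (j : Fin 4) :
    lam j (∑ i, w i • p i) = ∑ i, w i * lam j (p i) :=
  polyDeg_one_interp _ (h.poly j) _ _ hw

theorem BD.gdot {T : Tetra} {lam g} (h : BD T lam g) (i j k : Fin 4) :
    dot3 (g i) (T.vtx j - T.vtx k) = (if i = j then (1 : ℝ) else 0) - if i = k then (1 : ℝ) else 0 := by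
  have := h.aff i (T.vtx j) (T.vtx k)
  rw [h.vtx, h.vtx] at this
  linarith

theorem BD.gz {T : Tetra} {lam g} (h : BD T lam g) (z : Vec) :
    (∑ i, dot3 (g i) z = 0) ∧ z = ∑ i, dot3 (g i) z • T.vtx i := by
  have h1 : ∀ i, dot3 (g i) z = lam i z - lam i 0 := by
    intro i
    have := h.aff i z 0
    rw [sub_zero] at this
    linarith
  simp only [h1, Finset.sum_sub_distrib, h.sum, sub_smul, h.repr, sub_self, sub_zero, and_self]

theorem BD.ext0 {T : Tetra} {lam g} (h : BD T lam g) (z : Vec) (k : Fin 4) (hz : ∀ j, j ≠ k → dot3 z (T.vtx j - T.vtx k) = 0) :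
    z = 0 := by
  apply dot3_self_eq_zero
  have hz' : ∀ j, dot3 z (T.vtx j) = dot3 z (T.vtx k) := by
    intro j
    by_cases hj : j = k
    · rw [hj]
    · have := hz j hj
      rw [dot3_sub_right] at this
      linarith
  have h2 := congrArg (dot3 z) (h.gz z).2
  rw [dot3_sum_right] at h2
  simp only [dot3_smul_right, hz'] at h2
  rw [← Finset.sum_mul, (h.gz z).1, zero_mul] at h2
  exact h2

theorem BD.mem_hull {T : Tetra} {lam g} (h : BD T lam g) (s : Set (Fin 4)) (x : Vec) :
    x ∈ convexHull ℝ (T.vtx '' s) ↔ (∀ j, 0 ≤ lam j x) ∧ ∀ j, j ∉ s → lam j x = 0 := by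
  constructor
  · intro hx
    have hconv : Convex ℝ {x | (∀ j, 0 ≤ lam j x) ∧ ∀ j, j ∉ s → lam j x = 0} := by
      intro y hy z hz a b ha hb hab
      have hc : ∀ j, lam j (a • y + b • z) = a * lam j y + b * lam j z := by
        intro j
        have := h.lam_comb ![a, b] ![y, z] (by simpa using hab) j
        simpa using this
      refine ⟨fun j => ?_, fun j hj => ?_⟩
      · rw [hc]
        have := hy.1 j
        have := hz.1 j
        positivity
      · rw [hc, hy.2 j hj, hz.2 j hj]; simp
    refine convexHull_min ?_ hconv hx
    rintro _ ⟨i, hi, rfl⟩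
    refine ⟨fun j => ?_, fun j hj => ?_⟩
    · rw [h.vtx]; split_ifs <;> norm_num
    · rw [h.vtx, if_neg]
      rintro rfl
      exact hj hi
  · rintro ⟨h0, h1⟩
    rw [← h.repr x]
    have e : ∑ i, lam i x • T.vtx i = ∑ i ∈ Finset.univ.filter (· ∈ s), lam i x • T.vtx i := by
      rw [Finset.sum_filter]
      refine Finset.sum_congr rfl fun i _ => ?_
      split_ifs with hi
      · rfl
      · rw [h1 i hi, zero_smul]
    have e1 : ∑ i ∈ Finset.univ.filter (· ∈ s), lam i x = 1 := by
      rw [← h.sum x, Finset.sum_filter]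
      refine Finset.sum_congr rfl fun i _ => ?_
      split_ifs with hi
      · rfl
      · rw [h1 i hi]
    rw [e]
    refine (convex_convexHull ℝ _).sum_mem (fun i _ => h0 i) e1 fun i hi => ?_
    exact subset_convexHull ℝ _ ⟨i, (Finset.mem_filter.1 hi).2, rfl⟩

theorem BD.mem_K {T : Tetra} {lam g} (h : BD T lam g) (x : Vec) : x ∈ T.K ↔ ∀ j, 0 ≤ lam j x := by
  have := h.mem_hull Set.univ x
  rw [Set.image_univ] at this
  rw [Tetra.K, this]
  simp

theorem BD.mem_face {T : Tetra} {lam g} (h : BD T lam g) (a : Fin 4) (x : Vec) :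
    x ∈ T.face a ↔ (∀ j, 0 ≤ lam j x) ∧ lam a x = 0 := by
  rw [Tetra.face, h.mem_hull]
  simp

theorem face_sub_K (T : Tetra) (a : Fin 4) : T.face a ⊆ T.K :=
  convexHull_mono (Set.image_subset_range _ _)

theorem edge_sub_K (T : Tetra) (a b : Fin 4) : T.edge a b ⊆ T.K := by
  refine (convex_convexHull ℝ _).segment_subset ?_ ?_ <;> exact subset_convexHull ℝ _ ⟨_, rfl⟩

theorem face_closed (T : Tetra) (a : Fin 4) : IsClosed (T.face a) :=
  ((Set.toFinite _).isCompact_convexHull (𝕜 := ℝ)).isClosed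

theorem edge_closed (T : Tetra) (a b : Fin 4) : IsClosed (T.edge a b) := by
  rw [Tetra.edge, ← convexHull_pair]
  exact ((Set.toFinite _).isCompact_convexHull (𝕜 := ℝ)).isClosed

/-- face vertices -/
def fv (T : Tetra) (a : Fin 4) (l : Fin 3) : Vec := T.vtx (a.succAbove l)

def fpar (T : Tetra) (a : Fin 4) (s : ℝ × ℝ) : Vec := ∑ l, bl s l • fv T a l

theorem bl_sum (s : ℝ × ℝ) : ∑ l, bl s l = 1 := by
  simp [bl, Fin.sum_univ_three]; ring
theorem bl_cont (l : Fin 3) : Continuous fun s => bl s l := by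
  fin_cases l <;> simp [bl] <;> fun_prop
theorem fpar_cont (T : Tetra) (a : Fin 4) : Continuous (fpar T a) := by
  unfold fpar
  exact continuous_finsetSum _ fun l _ => (bl_cont l).smul continuous_const

theorem BD.lam_fpar {T : Tetra} {lam g} (h : BD T lam g) (a : Fin 4) (s : ℝ × ℝ) (l : Fin 3) :
    lam (a.succAbove l) (fpar T a s) = bl s l := by
  unfold fpar
  rw [h.lam_comb _ _ (bl_sum s)]
  simp [fv, h.vtx, (Fin.succAbove_right_injective).eq_iff]

theorem BD.lam_fpar' {T : Tetra} {lam g} (h : BD T lam g) (a : Fin 4) (s : ℝ × ℝ) :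
    lam a (fpar T a s) = 0 := by
  unfold fpar
  rw [h.lam_comb _ _ (bl_sum s)]
  simp [fv, h.vtx, (Fin.succAbove_ne a _).symm]

theorem BD.face_eq {T : Tetra} {lam g} (h : BD T lam g) (a : Fin 4) : T.face a = fpar T a '' Tri := by
  ext x
  rw [h.mem_face]
  constructor
  · rintro ⟨h0, h1⟩
    have hs := h.sum x
    have hr := h.repr x
    rw [Fin.sum_univ_succAbove _ a, Fin.sum_univ_three, h1] at hs
    rw [Fin.sum_univ_succAbove _ a, Fin.sum_univ_three, h1] at hr
    refine ⟨(lam (a.succAbove 1) x, lam (a.succAbove 2) x), ⟨h0 _, h0 _, ?_⟩, ?_⟩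
    · have := h0 (a.succAbove 0)
      simp only; linarith
    · refine Eq.trans ?_ hr
      have : 1 - lam (a.succAbove 1) x - lam (a.succAbove 2) x = lam (a.succAbove 0) x := by linarith
      simp [fpar, bl, fv, Fin.sum_univ_three, this]
  · rintro ⟨s, ⟨h1, h2, h3⟩, rfl⟩
    refine ⟨fun j => ?_, h.lam_fpar' a s⟩
    rcases Fin.eq_self_or_eq_succAbove a j with rfl | ⟨l, rfl⟩
    · rw [h.lam_fpar']
    · rw [h.lam_fpar]
      fin_cases l <;> simp [bl] <;> linarith

theorem BD.face_int {T : Tetra} {lam g} (h : BD T lam g) (a : Fin 4) :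
    ∃ c : ℝ, c ≠ 0 ∧ ∀ f : Vec → ℝ, ∫ x in T.face a, f x ∂μH[2] = c * ∫ s in Tri, f (fpar T a s) := by
  let L : ℝ × ℝ →ₗ[ℝ] Vec :=
    (LinearMap.fst ℝ ℝ ℝ).smulRight (fv T a 1 - fv T a 0) + (LinearMap.snd ℝ ℝ ℝ).smulRight (fv T a 2 - fv T a 0)
  have hL : ∀ s, fv T a 0 + L s = fpar T a s := by
    intro s
    simp only [L, fpar, bl, Fin.sum_univ_three]
    simp
    module
  have hinj : Function.Injective L := by
    intro s t hst
    have : fpar T a s = fpar T a t := by rw [← hL, ← hL, hst]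
    have h1 := h.lam_fpar a s
    rw [this] at h1
    have e1 := (h1 1).symm.trans (h.lam_fpar a t 1)
    have e2 := (h1 2).symm.trans (h.lam_fpar a t 2)
    simp [bl] at e1 e2
    exact Prod.ext e1 e2
  obtain ⟨c, hc, hint⟩ := haus_param 2 (by norm_num) hausdorffMeasure_prod_real L hinj (fv T a 0)
  refine ⟨c, hc, fun f => ?_⟩
  have := hint Tri f
  simp only [hL] at this
  rw [h.face_eq]
  exact this

theorem BD.edge_int {T : Tetra} {lam g} (h : BD T lam g) (a b : Fin 4) (hab : a ≠ b) :
    ∃ c : ℝ, c ≠ 0 ∧ ∀ f : Vec → ℝ, ∫ x in T.edge a b, f x ∂μH[1]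
      = c * ∫ s in Set.Icc (0:ℝ) 1, f (T.vtx a + s • (T.vtx b - T.vtx a)) := by
  let L : ℝ →ₗ[ℝ] Vec := (LinearMap.id).smulRight (T.vtx b - T.vtx a)
  have hinj : Function.Injective L := by
    intro s t hst
    have h1 : s • (T.vtx b - T.vtx a) = t • (T.vtx b - T.vtx a) := hst
    have h2 := congrArg (dot3 (g b)) h1
    rw [dot3_smul_right, dot3_smul_right, h.gdot] at h2
    simpa [hab.symm] using h2
  obtain ⟨c, hc, hint⟩ := haus_param 1 (by norm_num) hausdorffMeasure_real L hinj (T.vtx a)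
  refine ⟨c, hc, fun f => ?_⟩
  have := hint (Set.Icc 0 1) f
  rw [Tetra.edge, segment_eq_image']
  exact this

theorem BD.normal {T : Tetra} {lam g} (h : BD T lam g) (a : Fin 4) :
    dot3 (T.outNormal a) (T.outNormal a) = 1 ∧
    ∃ κ : ℝ, κ ≠ 0 ∧ ∀ z, dot3 (T.outNormal a) z = κ * dot3 (g a) z := by
  set e1 := T.vtx (a.succAbove 1) - T.vtx (a.succAbove 0) with he1
  set e2 := T.vtx (a.succAbove 2) - T.vtx (a.succAbove 0) with he2
  set u := cross3 e1 e2 with hu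
  have hn : ∃ σ : ℝ, σ * σ = 1 ∧ T.outNormal a = σ • normalize3 u := by
    unfold Tetra.outNormal
    simp only
    refine ⟨_, ?_, rfl⟩
    split_ifs <;> norm_num
  obtain ⟨σ, hσ, hn⟩ := hn
  have hue1 : dot3 u e1 = 0 := by simp [hu, dot3, cross3, Fin.sum_univ_three]; ring
  have hue2 : dot3 u e2 = 0 := by simp [hu, dot3, cross3, Fin.sum_univ_three]; ring
  have hu0 : u ≠ 0 := by
    intro h0
    have i1 : dot3 (g (a.succAbove 1)) e1 = 1 := by
      rw [he1, h.gdot]; simp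
    have i2 : dot3 (g (a.succAbove 1)) e2 = 0 := by
      rw [he2, h.gdot]; simp
    have i3 : dot3 (g (a.succAbove 2)) e2 = 1 := by
      rw [he2, h.gdot]; simp
    have id1 : cross3 u (g (a.succAbove 1)) = dot3 (g (a.succAbove 1)) e1 • e2 - dot3 (g (a.succAbove 1)) e2 • e1 := by
      ext i; fin_cases i <;> simp [hu, dot3, cross3, Fin.sum_univ_three] <;> ring
    rw [i1, i2, h0] at id1
    have : e2 = 0 := by
      have h3 : e2 = ![0, 0, 0] := by simpa [cross3] using id1.symm
      rw [h3]; ext i; fin_cases i <;> rfl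
    rw [this, dot3_zero_right] at i3
    norm_num at i3
  have huu : 0 < dot3 u u := by
    refine lt_of_le_of_ne ?_ fun h0 => hu0 (dot3_self_eq_zero h0.symm)
    simp only [dot3, Fin.sum_univ_three]; nlinarith [mul_self_nonneg (u 0), mul_self_nonneg (u 1), mul_self_nonneg (u 2)]
  have hnn : dot3 (T.outNormal a) (T.outNormal a) = 1 := by
    rw [hn, normalize3, enorm3]
    simp only [dot3_smul_left, dot3_smul_right]
    have hs := Real.mul_self_sqrt huu.le
    have hs0 : Real.sqrt (dot3 u u) ≠ 0 := (Real.sqrt_pos.2 huu).ne'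
    field_simp
    nlinarith
  have hne1 : dot3 (T.outNormal a) e1 = 0 := by
    rw [hn, normalize3]; simp only [dot3_smul_left, hue1]; ring
  have hne2 : dot3 (T.outNormal a) e2 = 0 := by
    rw [hn, normalize3]; simp only [dot3_smul_left, hue2]; ring
  refine ⟨hnn, dot3 (T.outNormal a) (T.vtx a - T.vtx (a.succAbove 0)), ?_⟩
  have key : ∀ z, dot3 (T.outNormal a) z = dot3 (T.outNormal a) (T.vtx a - T.vtx (a.succAbove 0)) * dot3 (g a) z := by
    intro z
    have hz := h.gz z
    rw [Fin.sum_univ_succAbove _ a, Fin.sum_univ_three] at hz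
    have h2 := congrArg (dot3 (T.outNormal a)) hz.2
    rw [he1, dot3_sub_right] at hne1
    rw [he2, dot3_sub_right] at hne2
    rw [Fin.sum_univ_succAbove _ a, Fin.sum_univ_three] at h2
    simp only [dot3_add_right, dot3_smul_right] at h2
    rw [dot3_sub_right, h2]
    linear_combination dot3 (g (a.succAbove 1)) z * hne1 + dot3 (g (a.succAbove 2)) z * hne2
      + dot3 (T.outNormal a) (T.vtx (a.succAbove 0)) * hz.1
  refine ⟨?_, key⟩
  intro h0
  have := key (T.outNormal a)
  rw [hnn, h0] at this
  norm_num at this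


theorem pd_mul {f h : Vec → ℝ} (hf : Differentiable ℝ f) (hh : Differentiable ℝ h) (i : Fin 3) (x : Vec) :
    pd i (fun y => f y * h y) x = f x * pd i h x + pd i f x * h x := by
  unfold pd
  rw [fderiv_fun_mul (hf x) (hh x)]
  simp [mul_comm]

theorem pd_add {f h : Vec → ℝ} (hf : Differentiable ℝ f) (hh : Differentiable ℝ h) (i : Fin 3) (x : Vec) :
    pd i (fun y => f y + h y) x = pd i f x + pd i h x := by
  unfold pd
  rw [fderiv_fun_add (hf x) (hh x)]
  simp

theorem pd_sub {f h : Vec → ℝ} (hf : Differentiable ℝ f) (hh : Differentiable ℝ h) (i : Fin 3) (x : Vec) :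
    pd i (fun y => f y - h y) x = pd i f x - pd i h x := by
  unfold pd
  rw [fderiv_fun_sub (hf x) (hh x)]
  simp

theorem BD.pd_lam {T : Tetra} {lam g} (h : BD T lam g) (a : Fin 4) (i : Fin 3) (x : Vec) :
    pd i (lam a) x = g a i := by
  have e : lam a = fun y => lam a 0 + ∑ j, g a j * y j := by
    ext y
    have := h.aff a y 0
    rw [sub_zero] at this
    exact this
  have hd : HasFDerivAt (lam a) (∑ j, g a j • ContinuousLinearMap.proj (R := ℝ) (φ := fun _ : Fin 3 => ℝ) j) x := by
    rw [e]
    refine HasFDerivAt.const_add _ (HasFDerivAt.fun_sum fun j _ => ?_)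
    exact ((ContinuousLinearMap.proj (R := ℝ) (φ := fun _ : Fin 3 => ℝ) j).hasFDerivAt).const_mul (g a j)
  unfold pd
  rw [hd.fderiv]
  simp [Pi.single_apply]

theorem curl_add {u v : Vec → Vec} (hu : ∀ i, Differentiable ℝ fun x => u x i)
    (hv : ∀ i, Differentiable ℝ fun x => v x i) (x : Vec) :
    curl3 (fun y => u y + v y) x = curl3 u x + curl3 v x := by
  have e : ∀ i j, pd i (fun y => (u y + v y) j) x = pd i (fun y => u y j) x + pd i (fun y => v y j) x :=
    fun i j => pd_add (hu j) (hv j) i x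
  ext i
  fin_cases i <;> simp only [curl3, e] <;> simp <;> ring

theorem curl_sub {u v : Vec → Vec} (hu : ∀ i, Differentiable ℝ fun x => u x i)
    (hv : ∀ i, Differentiable ℝ fun x => v x i) (x : Vec) :
    curl3 (fun y => u y - v y) x = curl3 u x - curl3 v x := by
  have e : ∀ i j, pd i (fun y => (u y - v y) j) x = pd i (fun y => u y j) x - pd i (fun y => v y j) x :=
    fun i j => pd_sub (hu j) (hv j) i x
  ext i
  fin_cases i <;> simp only [curl3, e] <;> simp <;> ring

theorem div_add {u v : Vec → Vec} (hu : ∀ i, Differentiable ℝ fun x => u x i)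
    (hv : ∀ i, Differentiable ℝ fun x => v x i) (x : Vec) :
    div3 (fun y => u y + v y) x = div3 u x + div3 v x := by
  have e : ∀ i j, pd i (fun y => (u y + v y) j) x = pd i (fun y => u y j) x + pd i (fun y => v y j) x :=
    fun i j => pd_add (hu j) (hv j) i x
  simp only [div3, e, Finset.sum_add_distrib]

theorem vpoly_diff {n : ℕ} {v : Vec → Vec} (h : VPolyDeg n v) (i : Fin 3) : Differentiable ℝ fun x => v x i :=
  (h i).differentiable

theorem vpoly_cont {n : ℕ} {v : Vec → Vec} (h : VPolyDeg n v) : Continuous v :=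
  continuous_pi fun i => (h i).cont

theorem vpoly_curl {n : ℕ} {v : Vec → Vec} (h : VPolyDeg (n+1) v) : VPolyDeg n (curl3 v) := by
  intro i
  fin_cases i
  · exact (pd_polyDeg (h 2) 1).sub (pd_polyDeg (h 1) 2)
  · exact (pd_polyDeg (h 0) 2).sub (pd_polyDeg (h 2) 0)
  · exact (pd_polyDeg (h 1) 0).sub (pd_polyDeg (h 0) 1)

theorem div_curl {n : ℕ} {v : Vec → Vec} (h : VPolyDeg n v) (x : Vec) : div3 (curl3 v) x = 0 := by
  choose p hp hpe using h
  have e : ∀ i j, (fun y => pd i (fun y => v y j) y) = fun y => MvPolynomial.eval y (MvPolynomial.pderiv i (p j)) := by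
    intro i j
    have : (fun y => v y j) = fun y => MvPolynomial.eval y (p j) := funext (hpe j)
    ext y
    rw [this, pd_poly]
  have d : ∀ i j, Differentiable ℝ (fun y => pd i (fun y => v y j) y) := by
    intro i j
    exact (show PolyDeg _ _ from ⟨_, le_rfl, fun y => congrFun (e i j) y⟩).differentiable
  have s : ∀ i j k, pd i (fun y => pd j (fun y => v y k) y) x = pd j (fun y => pd i (fun y => v y k) y) x := by
    intro i j k
    rw [e, e, pd_poly, pd_poly, pderiv_swap]
  have c0 : (fun y => curl3 v y 0) = fun y => pd 1 (fun y => v y 2) y - pd 2 (fun y => v y 1) y := rfl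
  have c1 : (fun y => curl3 v y 1) = fun y => pd 2 (fun y => v y 0) y - pd 0 (fun y => v y 2) y := rfl
  have c2 : (fun y => curl3 v y 2) = fun y => pd 0 (fun y => v y 1) y - pd 1 (fun y => v y 0) y := rfl
  rw [div3, Fin.sum_univ_three, c0, c1, c2, pd_sub (d _ _) (d _ _), pd_sub (d _ _) (d _ _), pd_sub (d _ _) (d _ _)]
  rw [s 0 1 2, s 0 2 1, s 1 2 0]
  ring

def bub (lam : Fin 4 → Vec → ℝ) (x : Vec) : ℝ := ∏ i, lam i x
def fbub (lam : Fin 4 → Vec → ℝ) (a : Fin 4) (x : Vec) : ℝ :=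
  lam (a.succAbove 0) x * lam (a.succAbove 1) x * lam (a.succAbove 2) x

theorem bub_eq (lam : Fin 4 → Vec → ℝ) (a : Fin 4) (x : Vec) : bub lam x = lam a x * fbub lam a x := by
  rw [bub, Fin.prod_univ_succAbove _ a, Fin.prod_univ_three, fbub]

theorem BD.fbub_poly {T : Tetra} {lam g} (h : BD T lam g) (a : Fin 4) : PolyDeg 3 (fbub lam a) :=
  ((h.poly _).mul (h.poly _)).mul (h.poly _)

theorem BD.bub_poly {T : Tetra} {lam g} (h : BD T lam g) : PolyDeg 4 (bub lam) := by
  have := (h.poly 0).mul (h.fbub_poly 0)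
  have e : bub lam = fun x => lam 0 x * fbub lam 0 x := funext (bub_eq lam 0)
  rw [e]; exact this

theorem BD.vbub {T : Tetra} {lam g} (h : BD T lam g) {r : Vec → Vec} {n : ℕ} (hr : VPolyDeg n r) :
    VPolyDeg (4 + n) (fun y => bub lam y • r y) := fun i => h.bub_poly.mul (hr i)

theorem BD.curl_bub {T : Tetra} {lam g} (h : BD T lam g) {r : Vec → Vec} {n : ℕ} (hr : VPolyDeg n r)
    (a : Fin 4) (x : Vec) (hx : lam a x = 0) :
    curl3 (fun y => bub lam y • r y) x = fbub lam a x • cross3 (g a) (r x) := by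
  have e : ∀ i j, pd i (fun y => (bub lam y • r y) j) x = g a i * (fbub lam a x * r x j) := by
    intro i j
    have : (fun y => (bub lam y • r y) j) = fun y => lam a y * (fbub lam a y * r y j) := by
      ext y
      simp only [Pi.smul_apply, smul_eq_mul, bub_eq lam a]; ring
    rw [this, pd_mul (h.poly a).differentiable ((h.fbub_poly a).mul (hr j)).differentiable, hx, h.pd_lam]
    ring
  ext i
  fin_cases i <;> simp only [curl3, e] <;> simp [cross3] <;> ring

theorem BD.fbub_fpar {T : Tetra} {lam g} (h : BD T lam g) (a : Fin 4) (s : ℝ × ℝ) :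
    fbub lam a (fpar T a s) = bl s 0 * bl s 1 * bl s 2 := by
  simp only [fbub, h.lam_fpar]

theorem dot_cross_cross (u v n q : Vec) :
    dot3 (cross3 (cross3 u v) n) q = dot3 u n * dot3 v q - dot3 v n * dot3 u q := by
  simp [dot3, cross3, Fin.sum_univ_three]; ring

theorem cross_smul_left (c : ℝ) (u v : Vec) : cross3 (c • u) v = c • cross3 u v := by
  ext i; fin_cases i <;> simp [cross3] <;> ring

/-- linear algebra behind the Tai-Winther unisolvence -/
theorem tw_lin (R : Fin 4 → Fin 4 → ℝ)
    (H : ∀ (a : Fin 4) (j : Fin 3), ∑ m, ∑ l, (if m = l then (3:ℝ) else 2) *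
      (R (a.succAbove m) (a.succAbove l) - R (a.succAbove m) (a.succAbove j)) = 0) :
    ∀ m l, R m l = R m 0 := by
  have s00 : (0 : Fin 4).succAbove 0 = 1 := rfl
  have s01 : (0 : Fin 4).succAbove 1 = 2 := rfl
  have s02 : (0 : Fin 4).succAbove 2 = 3 := rfl
  have s10 : (1 : Fin 4).succAbove 0 = 0 := rfl
  have s11 : (1 : Fin 4).succAbove 1 = 2 := rfl
  have s12 : (1 : Fin 4).succAbove 2 = 3 := rfl
  have s20 : (2 : Fin 4).succAbove 0 = 0 := rfl
  have s21 : (2 : Fin 4).succAbove 1 = 1 := rfl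
  have s22 : (2 : Fin 4).succAbove 2 = 3 := rfl
  have s30 : (3 : Fin 4).succAbove 0 = 0 := rfl
  have s31 : (3 : Fin 4).succAbove 1 = 1 := rfl
  have s32 : (3 : Fin 4).succAbove 2 = 2 := rfl
  have h00 := H 0 0
  have h01 := H 0 1
  have h02 := H 0 2
  have h10 := H 1 0
  have h11 := H 1 1
  have h12 := H 1 2
  have h20 := H 2 0
  have h21 := H 2 1
  have h22 := H 2 2
  have h30 := H 3 0
  have h31 := H 3 1
  have h32 := H 3 2
  clear H
  simp [Fin.sum_univ_three, s00, s01, s02] at h00 h01 h02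
  simp [Fin.sum_univ_three, s10, s11, s12] at h10 h11 h12
  simp [Fin.sum_univ_three, s20, s21, s22] at h20 h21 h22
  simp [Fin.sum_univ_three, s30, s31, s32] at h30 h31 h32
  intro m l
  fin_cases m <;> fin_cases l <;> simp only [Fin.mk_zero, Fin.mk_one, Fin.reduceFinMk, Fin.zero_eta, Fin.isValue] <;> linarith


theorem vinterp1 {ι : Type*} [Fintype ι] {r : Vec → Vec} (hr : VPolyDeg 1 r) (v : ι → Vec) (l : ι → ℝ)
    (hl : ∑ a, l a = 1) : r (∑ a, l a • v a) = ∑ a, l a • r (v a) := by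
  ext i
  rw [polyDeg_one_interp _ (hr i) v l hl]
  simp

theorem BD.vzero1 {T : Tetra} {lam g} (h : BD T lam g) {r : Vec → Vec} (hr : VPolyDeg 1 r)
    (h0 : ∀ j, r (T.vtx j) = 0) (x : Vec) : r x = 0 := by
  have := vinterp1 hr T.vtx (fun j => lam j x) (h.sum x)
  rw [h.repr] at this
  simpa [h0] using this

theorem BD.fpar_sub {T : Tetra} {lam g} (h : BD T lam g) (a : Fin 4) (x : Vec) (hx : x ∈ T.face a) (j : Fin 3) :
    dot3 (g a) (x - fv T a j) = 0 ∧ dot3 (T.outNormal a) (x - fv T a j) = 0 := by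
  have h1 : dot3 (g a) (x - fv T a j) = 0 := by
    have := h.aff a x (fv T a j)
    rw [((h.mem_face a x).1 hx).2, fv, h.vtx, if_neg (Fin.succAbove_ne a j).symm] at this
    rw [fv]; linarith
  obtain ⟨_, κ, _, hk⟩ := h.normal a
  exact ⟨h1, by rw [hk, h1, mul_zero]⟩

theorem BD.fpar_mem {T : Tetra} {lam g} (h : BD T lam g) (a : Fin 4) {s : ℝ × ℝ} (hs : s ∈ Tri) :
    fpar T a s ∈ T.face a := by rw [h.face_eq]; exact ⟨s, hs, rfl⟩

theorem tri_congr {f f' : ℝ × ℝ → ℝ} (h : ∀ s ∈ Tri, f s = f' s) : ∫ s in Tri, f s = ∫ s in Tri, f' s :=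
  setIntegral_congr_fun tri_closed.measurableSet h

theorem BD.tw_unisolv {T : Tetra} {lam g} (h : BD T lam g) {r : Vec → Vec} (hr : VPolyDeg 1 r)
    (H : ∀ a q, MemRT (T.outNormal a) q → faceTanMoment T a (curl3 (fun y => bub lam y • r y)) q = 0) :
    ∀ x, r x = 0 := by
  have key : ∀ (a : Fin 4) (j : Fin 3), ∑ m, ∑ l, (if m = l then (3:ℝ) else 2) *
      (dot3 (r (T.vtx (a.succAbove m))) (T.vtx (a.succAbove l)) -
       dot3 (r (T.vtx (a.succAbove m))) (T.vtx (a.succAbove j))) = 0 := by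
    intro a j
    set n := T.outNormal a with hn
    obtain ⟨hnn, κ, hκ, hk⟩ := h.normal a
    rw [← hn] at hnn hk
    let q : Vec → Vec := fun x => -(fv T a j - dot3 (fv T a j) n • n) + (1:ℝ) • (x - dot3 x n • n)
    have hq : MemRT n q := by
      refine ⟨_, 1, ?_, fun x => rfl⟩
      rw [← neg_one_smul ℝ, dot3_smul_left, dot3_sub_left, dot3_smul_left, hnn]; ring
    have h1 := H a q hq
    obtain ⟨c, hc, hint⟩ := h.face_int a
    rw [faceTanMoment, hint, ← hn] at h1
    have h2 := (mul_eq_zero.1 h1).resolve_left hc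
    have h3 : ∀ s ∈ Tri, dot3 (cross3 (curl3 (fun y => bub lam y • r y) (fpar T a s)) n) (q (fpar T a s))
        = bl s 0 * bl s 1 * bl s 2 * ∑ m, ∑ l, bl s m * bl s l *
          (dot3 (g a) n * dot3 (r (fv T a m)) (fv T a l - fv T a j)) := by
      intro s hs
      have hF := h.fpar_mem a hs
      have hsub := h.fpar_sub a _ hF j
      rw [← hn] at hsub
      have hqx : q (fpar T a s) = fpar T a s - fv T a j := by
        have e : dot3 (fpar T a s) n = dot3 (fv T a j) n := by
          rw [dot3_comm _ n, dot3_comm _ n]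
          have := hsub.2
          rw [dot3_sub_right] at this
          linarith
        simp only [q, e]
        module
      rw [hqx, h.curl_bub hr a _ (h.lam_fpar' a s), cross_smul_left, dot3_smul_left, dot_cross_cross, hsub.1,
        h.fbub_fpar]
      have e1 : r (fpar T a s) = ∑ m, bl s m • r (fv T a m) := vinterp1 hr _ _ (bl_sum s)
      have e2 : fpar T a s - fv T a j = ∑ l, bl s l • (fv T a l - fv T a j) := by
        simp only [smul_sub, Finset.sum_sub_distrib, ← Finset.sum_smul, bl_sum, one_smul, fpar]
      rw [e1, e2]
      simp only [dot3_sum_left, dot3_sum_right, dot3_smul_left, dot3_smul_right, Finset.mul_sum]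
      rw [mul_zero, sub_zero]
      simp only [Finset.mul_sum]
      rw [Finset.sum_comm]
      refine Finset.sum_congr rfl fun m _ => Finset.sum_congr rfl fun l _ => ?_
      ring
    rw [tri_congr h3, tri_tw] at h2
    have hgn : dot3 (g a) n ≠ 0 := by
      intro h0
      have := hk n
      rw [hnn, h0] at this
      norm_num at this
    simp only [Fin.sum_univ_three, dot3_sub_right, fv] at h2 ⊢
    simp
    have h4 : dot3 (g a) n * 0 = 0 := mul_zero _
    apply mul_left_cancel₀ hgn
    rw [h4]
    field_simp at h2
    linarith
  have h5 := tw_lin (fun m l => dot3 (r (T.vtx m)) (T.vtx l)) key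
  refine h.vzero1 hr fun j => h.ext0 _ 0 fun l _ => ?_
  rw [dot3_sub_right, h5 j l, sub_self]

theorem vpoly_dot {n : ℕ} {v : Vec → Vec} (h : VPolyDeg n v) (c : Vec) : PolyDeg n fun x => dot3 (v x) c := by
  simp only [dot3, Fin.sum_univ_three]
  exact (((h 0).mulc _).add ((h 1).mulc _)).add ((h 2).mulc _)

theorem dot_cont {X : Type*} [TopologicalSpace X] {u v : X → Vec} (hu : Continuous u) (hv : Continuous v) :
    Continuous fun x => dot3 (u x) (v x) := by
  unfold dot3; fun_prop

theorem cross_cont {X : Type*} [TopologicalSpace X] {u v : X → Vec} (hu : Continuous u) (hv : Continuous v) :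
    Continuous fun x => cross3 (u x) (v x) := by
  refine continuous_pi fun i => ?_
  fin_cases i <;> simp [cross3] <;> fun_prop

theorem cross_sub_left (u v w : Vec) : cross3 (u - v) w = cross3 u w - cross3 v w := by
  ext i; fin_cases i <;> simp [cross3] <;> ring

theorem rt_cont {n : Vec} {q : Vec → Vec} (h : MemRT n q) : Continuous q := by
  obtain ⟨a, c, _, h⟩ := h
  rw [funext h]
  have : Continuous fun x : Vec => dot3 x n := dot_cont continuous_id continuous_const
  fun_prop

theorem rm_cont {k : ℕ} {n : Vec} {q : Vec → Vec} (h : MemRM k n q) : Continuous q := by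
  obtain ⟨a, c, _, _, h⟩ := h
  rw [funext h]
  have : Continuous fun x : Vec => cross3 n x := cross_cont continuous_const continuous_id
  fun_prop

theorem BD.tan_sub {T : Tetra} {lam g} (h : BD T lam g) (a : Fin 4) {u v q : Vec → Vec} (hu : Continuous u)
    (hv : Continuous v) (hq : Continuous q) :
    faceTanMoment T a (fun x => u x - v x) q = faceTanMoment T a u q - faceTanMoment T a v q := by
  obtain ⟨c, _, hi⟩ := h.face_int a
  unfold faceTanMoment
  rw [hi, hi, hi, ← mul_sub, ← integral_sub]
  · simp only [cross_sub_left, dot3_sub_left]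
  · exact tri_int ((dot_cont (cross_cont hu continuous_const) hq).comp (fpar_cont T a))
  · exact tri_int ((dot_cont (cross_cont hv continuous_const) hq).comp (fpar_cont T a))

theorem BD.nor_sub {T : Tetra} {lam g} (h : BD T lam g) (a : Fin 4) {u v : Vec → Vec} {q : Vec → ℝ} (hu : Continuous u)
    (hv : Continuous v) (hq : Continuous q) :
    faceNorMoment T a (fun x => u x - v x) q = faceNorMoment T a u q - faceNorMoment T a v q := by
  obtain ⟨c, _, hi⟩ := h.face_int a
  unfold faceNorMoment
  rw [hi, hi, hi, ← mul_sub, ← integral_sub]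
  · simp only [dot3_sub_left, sub_mul]
  · exact tri_int (((dot_cont hu continuous_const).mul hq).comp (fpar_cont T a))
  · exact tri_int (((dot_cont hv continuous_const).mul hq).comp (fpar_cont T a))

theorem BD.edge_sub {T : Tetra} {lam g} (h : BD T lam g) (a b : Fin 4) (hab : a ≠ b) {u v : Vec → Vec} {q : Vec → ℝ}
    (hu : Continuous u) (hv : Continuous v) (hq : Continuous q) :
    edgeMoment T a b (fun x => u x - v x) q = edgeMoment T a b u q - edgeMoment T a b v q := by
  obtain ⟨c, _, hi⟩ := h.edge_int a b hab
  have hp : Continuous fun s : ℝ => T.vtx a + s • (T.vtx b - T.vtx a) := by fun_prop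
  unfold edgeMoment
  rw [hi, hi, hi, ← mul_sub, ← integral_sub]
  · simp only [dot3_sub_left, sub_mul]
  · exact (((dot_cont hu continuous_const).mul hq).comp hp).continuousOn.integrableOn_compact isCompact_Icc
  · exact (((dot_cont hv continuous_const).mul hq).comp hp).continuousOn.integrableOn_compact isCompact_Icc

theorem tan_congr (T : Tetra) (a : Fin 4) {u v : Vec → Vec} (q : Vec → Vec) (h : ∀ x ∈ T.face a, u x = v x) :
    faceTanMoment T a u q = faceTanMoment T a v q :=
  setIntegral_congr_fun (face_closed T a).measurableSet fun x hx => by simp only [h x hx]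

theorem nor_congr (T : Tetra) (a : Fin 4) {u v : Vec → Vec} (q : Vec → ℝ)
    (h : ∀ x ∈ T.face a, dot3 (u x) (T.outNormal a) = dot3 (v x) (T.outNormal a)) :
    faceNorMoment T a u q = faceNorMoment T a v q :=
  setIntegral_congr_fun (face_closed T a).measurableSet fun x hx => by simp only [h x hx]

theorem edge_congr (T : Tetra) (a b : Fin 4) {u v : Vec → Vec} (q : Vec → ℝ) (h : ∀ x ∈ T.edge a b, u x = v x) :
    edgeMoment T a b u q = edgeMoment T a b v q :=
  setIntegral_congr_fun (edge_closed T a b).measurableSet fun x hx => by simp only [h x hx]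

theorem BD.vtx_face {T : Tetra} {lam g} (h : BD T lam g) (a j : Fin 4) (hj : a ≠ j) : T.vtx j ∈ T.face a := by
  rw [h.mem_face]
  refine ⟨fun i => ?_, by rw [h.vtx, if_neg hj]⟩
  rw [h.vtx]; split_ifs <;> norm_num

theorem BD.nor_unisolv {T : Tetra} {lam g} (h : BD T lam g) {d : Vec → Vec} (hd : VPolyDeg 1 d)
    (H : ∀ a q, PolyDeg 1 q → faceNorMoment T a d q = 0) : ∀ x, d x = 0 := by
  have h1 : ∀ a, ∀ x ∈ T.face a, dot3 (d x) (T.outNormal a) = 0 := by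
    intro a x hx
    have hp := vpoly_dot hd (T.outNormal a)
    have h2 := H a _ hp
    obtain ⟨c, hc, hi⟩ := h.face_int a
    rw [faceNorMoment, hi] at h2
    have h3 := (mul_eq_zero.1 h2).resolve_left hc
    have h4 := sq_zero_of_int tri_compact tri_sub (fun s => dot3 (d (fpar T a s)) (T.outNormal a))
      (hp.cont.comp (fpar_cont T a)) h3
    rw [h.face_eq] at hx
    obtain ⟨s, hs, rfl⟩ := hx
    exact h4 s hs
  refine h.vzero1 hd fun j => ?_
  have h2 : ∀ a, a ≠ j → dot3 (g a) (d (T.vtx j)) = 0 := by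
    intro a ha
    obtain ⟨_, κ, hκ, hk⟩ := h.normal a
    have := h1 a _ (h.vtx_face a j ha)
    rw [dot3_comm, hk] at this
    exact (mul_eq_zero.1 this).resolve_left hκ
  obtain ⟨h3, h4⟩ := h.gz (d (T.vtx j))
  have h5 : dot3 (g j) (d (T.vtx j)) = 0 := by
    rw [Finset.sum_eq_single j (fun a _ ha => h2 a ha) (by simp)] at h3
    exact h3
  rw [h4]
  refine Finset.sum_eq_zero fun a _ => ?_
  by_cases ha : a = j
  · rw [ha, h5, zero_smul]
  · rw [h2 a ha, zero_smul]

theorem BD.bub_nor {T : Tetra} {lam g} (h : BD T lam g) {r : Vec → Vec} {n : ℕ} (hr : VPolyDeg n r) (a : Fin 4)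
    (x : Vec) (hx : x ∈ T.face a) : dot3 (curl3 (fun y => bub lam y • r y) x) (T.outNormal a) = 0 := by
  obtain ⟨_, κ, _, hk⟩ := h.normal a
  rw [h.curl_bub hr a x ((h.mem_face a x).1 hx).2, dot3_comm, hk, dot3_smul_right]
  have : dot3 (g a) (cross3 (g a) (r x)) = 0 := by simp [dot3, cross3, Fin.sum_univ_three]; ring
  rw [this]; ring

theorem BD.bub_zero {T : Tetra} {lam g} (h : BD T lam g) (a : Fin 4) (x : Vec) (hx : x ∈ T.face a) : bub lam x = 0 := by
  rw [bub_eq lam a, ((h.mem_face a x).1 hx).2, zero_mul]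

theorem BD.bub_zero_edge {T : Tetra} {lam g} (h : BD T lam g) (a b : Fin 4) (x : Vec) (hx : x ∈ T.edge a b) :
    bub lam x = 0 := by
  obtain ⟨c, hc⟩ : ∃ c : Fin 4, c ≠ a ∧ c ≠ b := by
    clear hx; revert a b; decide
  refine h.bub_zero c x ?_
  refine (convex_convexHull ℝ _).segment_subset ?_ ?_ hx
  · exact h.vtx_face c a hc.1
  · exact h.vtx_face c b hc.2


theorem vcross_poly {p : Vec → Vec} {n : ℕ} (hp : VPolyDeg n p) : VPolyDeg (1 + n) fun x => cross3 x (p x) := by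
  intro i
  fin_cases i
  · exact ((polyDeg_coord 1).mul (hp 2)).sub ((polyDeg_coord 2).mul (hp 1))
  · exact ((polyDeg_coord 2).mul (hp 0)).sub ((polyDeg_coord 0).mul (hp 2))
  · exact ((polyDeg_coord 0).mul (hp 1)).sub ((polyDeg_coord 1).mul (hp 0))

theorem vcross_const {p : Vec → Vec} {n : ℕ} (hp : VPolyDeg n p) (c : Vec) : VPolyDeg n fun x => cross3 c (p x) := by
  intro i
  fin_cases i
  · exact ((hp 2).cmul _).sub ((hp 1).cmul _)
  · exact ((hp 0).cmul _).sub ((hp 2).cmul _)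
  · exact ((hp 1).cmul _).sub ((hp 0).cmul _)

theorem vpoly_add {u v : Vec → Vec} {n : ℕ} (hu : VPolyDeg n u) (hv : VPolyDeg n v) : VPolyDeg n fun x => u x + v x :=
  fun i => (hu i).add (hv i)
theorem vpoly_sub {u v : Vec → Vec} {n : ℕ} (hu : VPolyDeg n u) (hv : VPolyDeg n v) : VPolyDeg n fun x => u x - v x :=
  fun i => (hu i).sub (hv i)
theorem vpoly_mono {u : Vec → Vec} {n m : ℕ} (hu : VPolyDeg n u) (h : n ≤ m) : VPolyDeg m u :=
  fun i => (hu i).mono h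

theorem nd_poly {k : ℕ} (hk : k = 1 ∨ k = 2) {d : Vec → Vec} (hd : MemND k d) : VPolyDeg 2 d := by
  obtain ⟨q, p, hq, hp, h⟩ := hd
  rw [funext h]
  have hg : VPolyDeg k (grad3 q) := fun i => pd_polyDeg hq i
  exact vpoly_add (vpoly_mono hg (by omega)) (vcross_poly hp)

theorem dot_cross_line (a b t : Vec) (s : ℝ) : dot3 (cross3 (a + s • t) b) t = dot3 (cross3 a b) t := by
  simp [dot3, cross3, Fin.sum_univ_three]; ring

theorem BD.nd_edge {T : Tetra} {lam g} (h : BD T lam g) {k : ℕ} (hk : k = 1 ∨ k = 2) {d : Vec → Vec} (hd : MemND k d)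
    (He : ∀ a b, a ≠ b → ∀ q, PolyDeg k q → edgeMoment T a b d q = 0) (a b : Fin 4) (hab : a ≠ b) :
    ∀ s ∈ Set.Icc (0:ℝ) 1, dot3 (d (T.vtx a + s • (T.vtx b - T.vtx a))) (T.vtx b - T.vtx a) = 0 := by
  have hdc := vpoly_cont (nd_poly hk hd)
  obtain ⟨q, p, hq, hp, hdx⟩ := hd
  set t := T.vtx b - T.vtx a with ht
  have hg : VPolyDeg k (grad3 q) := fun i => pd_polyDeg hq i
  have hQ : VPolyDeg k fun x => grad3 q x + cross3 (T.vtx a) (p x) :=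
    vpoly_add hg (vpoly_mono (vcross_const hp _) (by omega))
  have hQ2 := vpoly_dot hQ t
  have hQd : ∀ s : ℝ, dot3 (grad3 q (T.vtx a + s • t) + cross3 (T.vtx a) (p (T.vtx a + s • t))) t
      = dot3 (d (T.vtx a + s • t)) t := by
    intro s
    rw [hdx, dot3_add_left, dot3_add_left, dot_cross_line]
  have h1 := He a b hab _ hQ2
  obtain ⟨c, hc, hi⟩ := h.edge_int a b hab
  rw [edgeMoment, hi] at h1
  have h2 := (mul_eq_zero.1 h1).resolve_left hc
  have htan : T.tangent a b = (enorm3 t)⁻¹ • t := rfl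
  have hpc : Continuous fun s : ℝ => T.vtx a + s • t := by fun_prop
  have ht0 : enorm3 t ≠ 0 := by
    intro h0
    have hnn : 0 ≤ dot3 t t := by
      simp only [dot3, Fin.sum_univ_three]; nlinarith [mul_self_nonneg (t 0), mul_self_nonneg (t 1), mul_self_nonneg (t 2)]
    have h3 := dot3_self_eq_zero ((Real.sqrt_eq_zero hnn).1 h0)
    have h4 := h.gdot b b a
    rw [← ht, h3, dot3_zero_right] at h4
    simp [hab.symm] at h4
  simp only [← ht, hQd, htan, dot3_smul_right, mul_assoc] at h2
  rw [integral_const_mul] at h2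
  have h3 := (mul_eq_zero.1 h2).resolve_left (inv_ne_zero ht0)
  refine sq_zero_of_int isCompact_Icc ?_ (fun s => dot3 (d (T.vtx a + s • t)) t) ?_ h3
  · rw [interior_Icc, closure_Ioo (by norm_num)]
  · exact (dot_cont hdc continuous_const).comp hpc

theorem dot_cross_nz (d n z : Vec) :
    dot3 (cross3 d n) (cross3 n z) = dot3 d n * dot3 n z - dot3 d z * dot3 n n := by
  simp [dot3, cross3, Fin.sum_univ_three]; ring

theorem BD.nd_face {T : Tetra} {lam g} (h : BD T lam g) {k : ℕ} (hk : k = 1 ∨ k = 2) {d : Vec → Vec} (hd : MemND k d)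
    (hv : ∀ a, d (T.vtx a) = 0)
    (hm : ∀ a b, dot3 (d ((1/2:ℝ) • (T.vtx a + T.vtx b))) (T.vtx b - T.vtx a) = 0)
    (Hf : ∀ a q, MemRM k (T.outNormal a) q → faceTanMoment T a d q = 0) (e : Fin 4) (m l p : Fin 3) (hml : m ≠ l) :
    dot3 (d ((1/2:ℝ) • (fv T e m + fv T e l))) (fv T e p - fv T e m) = 0 := by
  have hd2 := nd_poly hk hd
  set n := T.outNormal e with hn
  obtain ⟨hnn, κ, hκ, hkk⟩ := h.normal e
  rw [← hn] at hnn hkk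
  have hsym : ∀ x y : Vec, (1/2:ℝ) • (x + y) = (1/2:ℝ) • (y + x) := fun x y => by rw [add_comm]
  have hself : ∀ x : Vec, (1/2:ℝ) • (x + x) = x := fun x => by module
  set D01 := d ((1/2:ℝ) • (fv T e 0 + fv T e 1)) with hD01
  set D02 := d ((1/2:ℝ) • (fv T e 0 + fv T e 2)) with hD02
  set D12 := d ((1/2:ℝ) • (fv T e 1 + fv T e 2)) with hD12
  have hvf : ∀ j, d (fv T e j) = 0 := fun j => hv _
  have hmf : ∀ i j, dot3 (d ((1/2:ℝ) • (fv T e i + fv T e j))) (fv T e j - fv T e i) = 0 := fun i j => hm _ _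
  -- representation on the face
  have hrep : ∀ s, d (fpar T e s) = (4 * (bl s 0 * bl s 1)) • D01 + (4 * (bl s 0 * bl s 2)) • D02
      + (4 * (bl s 1 * bl s 2)) • D12 := by
    intro s
    ext i
    have := polyDeg_two_interp _ (hd2 i) (fv T e) (bl s) (bl_sum s)
    rw [fpar, this]
    simp only [Fin.sum_univ_three, hself, hvf, hsym (fv T e 1) (fv T e 0), hsym (fv T e 2) (fv T e 0),
      hsym (fv T e 2) (fv T e 1), ← hD01, ← hD02, ← hD12]
    simp
    ring
  have fdot : ∀ j, dot3 n (fv T e j - fv T e 0) = 0 := fun j => by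
    have := (h.fpar_sub e _ (h.vtx_face e _ (Fin.succAbove_ne e j).symm) 0).2
    rw [← hn] at this
    exact this
  obtain ⟨c, hc, hint⟩ := h.face_int e
  -- constant test fields
  have hconst : ∀ j, dot3 (D01 + D02 + D12) (fv T e j - fv T e 0) = 0 := by
    intro j
    have h1 := Hf e (fun _ => cross3 n (fv T e j - fv T e 0))
      ⟨cross3 n (fv T e j - fv T e 0), 0, by simp [dot3, cross3, Fin.sum_univ_three]; ring, fun _ => rfl, fun x => by simp⟩
    rw [faceTanMoment, hint, ← hn] at h1
    have h2 := (mul_eq_zero.1 h1).resolve_left hc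
    have h3 : ∀ s ∈ Tri, dot3 (cross3 (d (fpar T e s)) n) (cross3 n (fv T e j - fv T e 0))
        = bl s 0 * bl s 1 * (-4 * dot3 D01 (fv T e j - fv T e 0)) + bl s 0 * bl s 2 * (-4 * dot3 D02 (fv T e j - fv T e 0))
         + bl s 1 * bl s 2 * (-4 * dot3 D12 (fv T e j - fv T e 0)) := by
      intro s _
      rw [dot_cross_nz, fdot, hnn, hrep]
      simp only [dot3_add_left, dot3_smul_left]
      ring
    rw [tri_congr h3, tri_nd1] at h2
    simp only [dot3_add_left]
    linarith
  have c1 := hconst 1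
  have c2 := hconst 2
  have m01 := hmf 0 1
  have m02 := hmf 0 2
  have m12 := hmf 1 2
  rw [← hD01] at m01
  rw [← hD02] at m02
  rw [← hD12] at m12
  simp only [dot3_sub_right, dot3_add_left] at c1 c2 m01 m02 m12
  have hγ : dot3 D12 (fv T e 1) - dot3 D12 (fv T e 0) = 0 := by
    rcases hk with rfl | rfl
    · -- k = 1
      obtain ⟨q, p, hq, hp, hdx⟩ := hd
      have hg : VPolyDeg 1 (grad3 q) := fun i => pd_polyDeg hq i
      have hG : PolyDeg 2 fun x => dot3 (d x) (x - fv T e 0) := by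
        have e1 : (fun x => dot3 (d x) (x - fv T e 0)) = fun x =>
            ((grad3 q x 0 * (x 0 - fv T e 0 0) + grad3 q x 1 * (x 1 - fv T e 0 1)) + grad3 q x 2 * (x 2 - fv T e 0 2))
              - dot3 (cross3 x (p x)) (fv T e 0) := by
          ext x
          rw [hdx]
          simp [dot3, cross3, Fin.sum_univ_three]; ring
        rw [e1]
        have hx : ∀ i, PolyDeg 1 fun x : Vec => x i - fv T e 0 i := fun i => (polyDeg_coord i).sub (polyDeg_const 1 _)
        exact ((((hg 0).mul (hx 0)).add ((hg 1).mul (hx 1))).add ((hg 2).mul (hx 2))).sub (vpoly_dot (vcross_poly hp) _)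
      have h1 := polyDeg_two_interp _ hG (fv T e) (bl (1/3, 1/3)) (bl_sum _)
      have h2 := hrep (1/3, 1/3)
      rw [← fpar, h2] at h1
      simp only [Fin.sum_univ_three, hself, hvf, hsym (fv T e 1) (fv T e 0), hsym (fv T e 2) (fv T e 0),
        hsym (fv T e 2) (fv T e 1), ← hD01, ← hD02, ← hD12, fpar, dot3_sub_right, dot3_add_left, dot3_add_right,
        dot3_smul_left, dot3_smul_right, dot3_zero_left] at h1
      simp [bl] at h1
      linarith
    · -- k = 2
      have h1 := Hf e (fun x => -cross3 n (fv T e 0) + (1:ℝ) • cross3 n x)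
        ⟨_, 1, by simp [dot3, cross3, Fin.sum_univ_three]; ring, fun hh => absurd hh (by norm_num), fun x => rfl⟩
      rw [faceTanMoment, hint, ← hn] at h1
      have h2 := (mul_eq_zero.1 h1).resolve_left hc
      have h3 : ∀ s ∈ Tri, dot3 (cross3 (d (fpar T e s)) n) (-cross3 n (fv T e 0) + (1:ℝ) • cross3 n (fpar T e s))
          = bl s 0 * bl s 1 * (∑ l, bl s l * (-4 * dot3 D01 (fv T e l - fv T e 0)))
           + bl s 0 * bl s 2 * (∑ l, bl s l * (-4 * dot3 D02 (fv T e l - fv T e 0)))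
           + bl s 1 * bl s 2 * (∑ l, bl s l * (-4 * dot3 D12 (fv T e l - fv T e 0))) := by
        intro s _
        have e2 : -cross3 n (fv T e 0) + (1:ℝ) • cross3 n (fpar T e s) = cross3 n (fpar T e s - fv T e 0) := by
          ext i; fin_cases i <;> simp [cross3] <;> ring
        have e3 : fpar T e s - fv T e 0 = ∑ l, bl s l • (fv T e l - fv T e 0) := by
          simp only [smul_sub, Finset.sum_sub_distrib, ← Finset.sum_smul, bl_sum, one_smul, fpar]
        rw [e2, e3, dot_cross_nz, dot3_sum_right, dot3_sum_right, hnn, hrep]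
        simp only [dot3_smul_right, fdot, Fin.sum_univ_three, dot3_add_left, dot3_smul_left]
        ring
      rw [tri_congr h3, tri_nd2] at h2
      simp only [dot3_sub_right] at h2
      linarith
  clear hint
  have fin : ∀ j, dot3 D01 (fv T e j) = dot3 D01 (fv T e 0) ∧ dot3 D02 (fv T e j) = dot3 D02 (fv T e 0) ∧
      dot3 D12 (fv T e j) = dot3 D12 (fv T e 0) := by
    intro j
    fin_cases j <;> refine ⟨?_, ?_, ?_⟩ <;> simp only [Fin.mk_zero, Fin.mk_one, Fin.reduceFinMk, Fin.zero_eta, Fin.isValue] <;> linarith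
  have fin2 : ∀ j j', dot3 D01 (fv T e j - fv T e j') = 0 ∧ dot3 D02 (fv T e j - fv T e j') = 0 ∧
      dot3 D12 (fv T e j - fv T e j') = 0 := by
    intro j j'
    simp only [dot3_sub_right, (fin j).1, (fin j).2.1, (fin j).2.2, (fin j').1, (fin j').2.1, (fin j').2.2, sub_self,
      and_self]
  have := fin2 p m
  clear_value D01 D02 D12
  fin_cases m <;> fin_cases l <;> simp only [Fin.mk_zero, Fin.mk_one, Fin.reduceFinMk, Fin.zero_eta, Fin.isValue, ne_eq, not_true_eq_false] at hml this ⊢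
  · rw [← hD01]; exact this.1
  · rw [← hD02]; exact this.2.1
  · rw [hsym, ← hD01]; exact this.1
  · rw [← hD12]; exact this.2.2
  · rw [hsym, ← hD02]; exact this.2.1
  · rw [hsym, ← hD12]; exact this.2.2

theorem BD.nd_unisolv {T : Tetra} {lam g} (h : BD T lam g) {k : ℕ} (hk : k = 1 ∨ k = 2) {d : Vec → Vec} (hd : MemND k d)
    (He : ∀ a b, a ≠ b → ∀ q, PolyDeg k q → edgeMoment T a b d q = 0)
    (Hf : ∀ a q, MemRM k (T.outNormal a) q → faceTanMoment T a d q = 0) : ∀ x, d x = 0 := by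
  have hv : ∀ a, d (T.vtx a) = 0 := by
    intro a
    refine h.ext0 _ a fun b hb => ?_
    have := h.nd_edge hk hd He a b hb.symm 0 (by norm_num)
    simpa using this
  have hm : ∀ a b, dot3 (d ((1/2:ℝ) • (T.vtx a + T.vtx b))) (T.vtx b - T.vtx a) = 0 := by
    intro a b
    by_cases hab : a = b
    · rw [hab, sub_self, dot3_zero_right]
    · have := h.nd_edge hk hd He a b hab (1/2) (by norm_num)
      have e : T.vtx a + (1/2:ℝ) • (T.vtx b - T.vtx a) = (1/2:ℝ) • (T.vtx a + T.vtx b) := by module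
      rwa [e] at this
  have hD : ∀ a b, d ((1/2:ℝ) • (T.vtx a + T.vtx b)) = 0 := by
    intro a b
    by_cases hab : a = b
    · have e : (1/2:ℝ) • (T.vtx a + T.vtx b) = T.vtx a := by rw [← hab]; module
      rw [e, hv]
    · refine h.ext0 _ a fun c hc => ?_
      obtain ⟨e, he⟩ : ∃ e : Fin 4, a ≠ e ∧ b ≠ e ∧ c ≠ e := by
        clear hab hc; revert a b c; decide
      obtain ⟨m, rfl⟩ := Fin.exists_succAbove_eq he.1
      obtain ⟨l, rfl⟩ := Fin.exists_succAbove_eq he.2.1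
      obtain ⟨p, rfl⟩ := Fin.exists_succAbove_eq he.2.2
      exact h.nd_face hk hd hv hm Hf e m l p fun hml => hab (by rw [hml])
  intro x
  ext i
  have := polyDeg_two_interp _ (nd_poly hk hd i) T.vtx (fun j => lam j x) (h.sum x)
  rw [h.repr] at this
  rw [this]
  simp [hD, hv]
  simp at hD
  simp [hD]


theorem K_closed (T : Tetra) : IsClosed T.K :=
  ((Set.toFinite _).isCompact_convexHull (𝕜 := ℝ)).isClosed

theorem BD.lam_line {T : Tetra} {lam g} (h : BD T lam g) (l : Fin 4) (x c : Vec) (t : ℝ) :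
    lam l (x + t • (c - x)) = lam l x + t * (lam l c - lam l x) := by
  rw [h.aff l (x + t • (c - x)) x, h.aff l c x, add_sub_cancel_left, dot3_smul_right]; ring

theorem BD.int_nonempty {T : Tetra} {lam g} (h : BD T lam g) : (interior T.K).Nonempty := by
  have ho : IsOpen {x | ∀ l, 0 < lam l x} := by
    simp only [Set.setOf_forall]
    exact isOpen_iInter_of_finite fun l => isOpen_lt continuous_const (h.poly l).cont
  refine ⟨∑ j, (1/4:ℝ) • T.vtx j, mem_interior.2 ⟨_, fun x hx => (h.mem_K x).2 fun l => (hx l).le, ho, ?_⟩⟩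
  intro l
  rw [h.lam_comb _ _ (by simp) l]
  simp [h.vtx]

theorem face_dich (M : Mesh) (Ω : Set Vec) (hΩ : M.Covers Ω) (hB : ∀ i, ∃ lam g, BD (M.el i) lam g)
    (i : Fin M.n) (a : Fin 4) :
    (∃ j b, i ≠ j ∧ (M.el i).face a = (M.el j).face b) ∨ (M.el i).face a ⊆ frontier Ω := by
  by_cases hsh : ∃ j b, i ≠ j ∧ (M.el i).face a = (M.el j).face b
  · exact Or.inl hsh
  right
  obtain ⟨lam, g, h⟩ := hB i
  have hA : ∀ x, lam a x = 0 → (∀ l, l ≠ a → 0 < lam l x) → ∀ j, i ≠ j → x ∉ (M.el j).K := by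
    intro x hx0 hx j hij hxj
    obtain ⟨s, e, hse, hK⟩ := M.conform i j hij
    have hxi : x ∈ (M.el i).K := (h.mem_K x).2 fun l => by
      by_cases hl : l = a
      · rw [hl, hx0]
      · exact (hx l hl).le
    have h1 : x ∈ convexHull ℝ ((M.el i).vtx '' s) := hK ▸ ⟨hxi, hxj⟩
    have h2 : ∀ l, l ≠ a → l ∈ s := by
      intro l hl
      by_contra hls
      exact (hx l hl).ne' (((h.mem_hull s x).1 h1).2 l hls)
    by_cases ha : a ∈ s
    · have hs : s = Set.univ := by
        ext l
        by_cases hl : l = a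
        · simp [hl, ha]
        · simp [h2 l hl]
      have h3 : (M.el i).K ⊆ (M.el j).K := by
        rw [hs, Set.image_univ] at hK
        exact Set.inter_eq_left.1 hK
      obtain ⟨y, hy⟩ := h.int_nonempty
      have h4 := M.disj i j hij
      have h5 : y ∈ interior (M.el i).K ∩ interior (M.el j).K := ⟨hy, interior_mono h3 hy⟩
      rw [h4] at h5
      exact h5
    · have hs : s = {l | l ≠ a} := by
        ext l
        refine ⟨fun hl hla => ha (hla ▸ hl), fun hl => h2 l hl⟩
      have hc : e.ncard = 3 := by
        have h3 := congrArg Set.ncard hse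
        rw [Set.ncard_image_of_injective _ (M.el i).indep.injective,
          Set.ncard_image_of_injective _ (M.el j).indep.injective] at h3
        rw [← h3, hs]
        have : {l : Fin 4 | l ≠ a} = {a}ᶜ := rfl
        rw [this, Set.ncard_compl]
        simp
      have hc1 : (eᶜ).ncard = 1 := by
        rw [Set.ncard_compl, hc]; simp
      obtain ⟨b, hb⟩ := Set.ncard_eq_one.1 hc1
      have he : e = {l | l ≠ b} := by
        rw [← compl_compl e, hb]; rfl
      apply hsh
      refine ⟨j, b, hij, ?_⟩
      rw [Tetra.face, Tetra.face, ← hs, ← he, hse]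
  have hBd : ∀ x, lam a x = 0 → (∀ l, l ≠ a → 0 < lam l x) → x ∈ frontier Ω := by
    intro x hx0 hx
    have hxi : x ∈ (M.el i).K := (h.mem_K x).2 fun l => by
      by_cases hl : l = a
      · rw [hl, hx0]
      · exact (hx l hl).le
    refine ⟨by rw [hΩ.2.1]; exact Set.mem_iUnion.2 ⟨i, hxi⟩, ?_⟩
    intro hxo
    have hsub := interior_subset hxo
    rw [hΩ.1, Mesh.domain] at hsub
    have ho : IsOpen (interior (⋃ j, (M.el j).K) ∩ ⋂ j, {y | i ≠ j → y ∉ (M.el j).K}) := by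
      refine isOpen_interior.inter (isOpen_iInter_of_finite fun j => ?_)
      by_cases hij : i = j
      · simp [hij]
      · simp only [ne_eq, hij, not_false_eq_true, forall_const]
        exact (K_closed _).isOpen_compl
    have hmem : x ∈ (interior (⋃ j, (M.el j).K) ∩ ⋂ j, {y | i ≠ j → y ∉ (M.el j).K}) :=
      ⟨hsub, Set.mem_iInter.2 fun j hij => hA x hx0 hx j hij⟩
    have hcont : Continuous fun t : ℝ => x + t • ((M.el i).vtx a - x) := by fun_prop
    have hopen := ho.preimage hcont
    have h0 : (0:ℝ) ∈ (fun t : ℝ => x + t • ((M.el i).vtx a - x)) ⁻¹'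
        (interior (⋃ j, (M.el j).K) ∩ ⋂ j, {y | i ≠ j → y ∉ (M.el j).K}) := by
      simpa using hmem
    obtain ⟨ε, hε, hball⟩ := Metric.isOpen_iff.1 hopen 0 h0
    have hin : (-(ε/2)) ∈ Metric.ball (0:ℝ) ε := by
      rw [Metric.mem_ball, dist_zero_right, Real.norm_eq_abs, abs_neg, abs_of_pos (by linarith)]; linarith
    have h2 := hball hin
    obtain ⟨h3, h4⟩ := h2
    obtain ⟨j, hj⟩ := Set.mem_iUnion.1 (interior_subset h3)
    by_cases hij : i = j
    · subst hij
      have h5 := (h.mem_K _).1 hj a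
      rw [h.lam_line, hx0, h.vtx] at h5
      simp at h5
      linarith
    · exact Set.mem_iInter.1 h4 j hij hj
  intro x hx
  rw [h.mem_face] at hx
  set c := fpar (M.el i) a (1/3, 1/3) with hc
  have hcont : Continuous fun t : ℝ => x + t • (c - x) := by fun_prop
  have ht : Filter.Tendsto (fun t : ℝ => x + t • (c - x)) (nhdsWithin 0 (Set.Ioo 0 1)) (nhds x) := by
    have := hcont.tendsto 0
    simp only [zero_smul, add_zero] at this
    exact this.mono_left nhdsWithin_le_nhds
  have : (nhdsWithin (0:ℝ) (Set.Ioo 0 1)).NeBot := by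
    rw [nhdsWithin_Ioo_eq_nhdsGT one_pos]; infer_instance
  refine isClosed_frontier.mem_of_tendsto ht ?_
  filter_upwards [self_mem_nhdsWithin] with t htt
  refine hBd _ ?_ ?_
  · rw [h.lam_line, hx.2, hc, h.lam_fpar']; ring
  · intro l hl
    obtain ⟨m, rfl⟩ := Fin.exists_succAbove_eq hl
    rw [h.lam_line, hc, h.lam_fpar]
    have h1 := hx.1 (a.succAbove m)
    have h2 : bl (1/3, 1/3) m = 1/3 := by
      fin_cases m <;> simp [bl]
      norm_num
    rw [h2]
    have := htt.1
    have := htt.2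
    nlinarith


theorem TestS.pd {φ : Vec → ℝ} (h : TestS φ) (k : Fin 3) : TestS (pd k φ) := by
  refine ⟨?_, ?_⟩
  · unfold _root_.pd
    exact (h.1.fderiv_right (m := (⊤ : ℕ∞)) (by simp)).clm_apply contDiff_const
  · exact h.2.fderiv_apply ℝ _

theorem TestS.sub {φ ψ : Vec → ℝ} (h : TestS φ) (h' : TestS ψ) : TestS (fun x => φ x - ψ x) := by
  refine ⟨h.1.sub h'.1, ?_⟩
  have := h.2.add (h'.2.neg)
  have e : (fun x => φ x - ψ x) = φ + -ψ := by ext x; simp [sub_eq_add_neg]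
  rw [e]; exact this

theorem TestV.comp {φ : Vec → Vec} (h : TestV φ) (j : Fin 3) : TestS (fun x => φ x j) := by
  refine ⟨contDiff_pi.1 h.1 j, ?_⟩
  exact h.2.comp_left (g := fun v : Vec => v j) rfl

theorem TestV.curl {φ : Vec → Vec} (h : TestV φ) (j : Fin 3) : TestS (fun x => curl3 φ x j) := by
  fin_cases j
  · exact ((h.comp 2).pd 1).sub ((h.comp 1).pd 2)
  · exact ((h.comp 0).pd 2).sub ((h.comp 2).pd 0)
  · exact ((h.comp 1).pd 0).sub ((h.comp 0).pd 1)

theorem TestS.diff {φ : Vec → ℝ} (h : TestS φ) : Differentiable ℝ φ := h.1.differentiable (by simp)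

theorem pd_comm {φ : Vec → ℝ} (h : TestS φ) (i k : Fin 3) (x : Vec) : pd i (pd k φ) x = pd k (pd i φ) x := by
  have hd : DifferentiableAt ℝ (fderiv ℝ φ) x :=
    ((h.1.fderiv_right (m := (⊤ : ℕ∞)) (by simp)).differentiable (by simp)) x
  have e : ∀ i k, pd i (pd k φ) x = fderiv ℝ (fderiv ℝ φ) x (Pi.single i 1) (Pi.single k 1) := by
    intro i k
    unfold pd
    rw [fderiv_clm_apply hd (differentiableAt_const _)]
    simp
  rw [e, e]
  have hs : IsSymmSndFDerivAt ℝ φ x := h.1.contDiffAt.isSymmSndFDerivAt (by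
    rw [minSmoothness_of_isRCLikeNormedField]
    exact WithTop.coe_le_coe.2 (le_top : (2 : ℕ∞) ≤ ⊤))
  exact hs _ _

theorem div_curl_smooth {φ : Vec → Vec} (h : TestV φ) (x : Vec) : ∑ i, pd i (fun y => curl3 φ y i) x = 0 := by
  have d : ∀ i j, Differentiable ℝ (fun y => pd i (fun y => φ y j) y) := fun i j => ((h.comp j).pd i).diff
  have s : ∀ i j k, pd i (fun y => pd j (fun y => φ y k) y) x = pd j (fun y => pd i (fun y => φ y k) y) x :=
    fun i j k => pd_comm (h.comp k) i j x
  have c0 : (fun y => curl3 φ y 0) = fun y => pd 1 (fun y => φ y 2) y - pd 2 (fun y => φ y 1) y := rfl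
  have c1 : (fun y => curl3 φ y 1) = fun y => pd 2 (fun y => φ y 0) y - pd 0 (fun y => φ y 2) y := rfl
  have c2 : (fun y => curl3 φ y 2) = fun y => pd 0 (fun y => φ y 1) y - pd 1 (fun y => φ y 0) y := rfl
  rw [Fin.sum_univ_three, c0, c1, c2, pd_sub (d _ _) (d _ _), pd_sub (d _ _) (d _ _), pd_sub (d _ _) (d _ _)]
  rw [s 0 1 2, s 0 2 1, s 1 2 0]
  ring

theorem test_int {f φ : Vec → ℝ} (hf : MemLp f 2 volume) (h : TestS φ) : Integrable (fun x => f x * φ x) := by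
  have h2 : MemLp φ 2 volume := h.1.continuous.memLp_of_hasCompactSupport h.2
  exact hf.integrable_mul h2

theorem zextS_memLp {Ω : Set Vec} (hΩ : MeasurableSet Ω) {f : Vec → ℝ} (h : MemL2S Ω f) :
    MemLp (zextS Ω f) 2 volume := (memLp_indicator_iff_restrict hΩ).2 h

theorem zextV_comp (Ω : Set Vec) (v : Vec → Vec) (i : Fin 3) :
    (fun x => zextV Ω v x i) = zextS Ω (fun x => v x i) := by
  ext x
  simp only [zextV, zextS, Set.indicator]
  split_ifs <;> rfl

theorem memL2V_comp {Ω : Set Vec} {v : Vec → Vec} (h : MemL2V Ω v) (i : Fin 3) : MemL2S Ω fun x => v x i :=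
  (ContinuousLinearMap.proj (R := ℝ) (φ := fun _ : Fin 3 => ℝ) i).comp_memLp' h

theorem h01_curl {Ω : Set Vec} (hΩ : MeasurableSet Ω) {v : Vec → ℝ} {gv : Vec → Vec} (h : MemH01S Ω v gv) :
    MemH0Curl Ω gv (fun _ => 0) := by
  obtain ⟨h1, h2, h3⟩ := h
  refine ⟨h2, MemLp.zero, fun φ hφ => ?_⟩
  have e0 : ∀ x, dot3 (zextV Ω (fun _ => (0:Vec)) x) (φ x) = 0 := by
    intro x
    simp [zextV, dot3]
  simp only [e0, integral_zero]
  simp only [dot3]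
  rw [integral_finsetSum]
  · have e1 : ∀ i, ∫ x, zextV Ω gv x i * curl3 φ x i = -∫ x, zextS Ω v x * pd i (fun y => curl3 φ y i) x :=
      fun i => h3 i _ (hφ.curl i)
    simp only [e1]
    rw [Finset.sum_neg_distrib, ← integral_finsetSum]
    · simp only [← Finset.mul_sum, div_curl_smooth hφ]
      simp
    · intro i _
      exact test_int (zextS_memLp hΩ h1) ((hφ.curl i).pd i)
  · intro i _
    have := test_int (zextS_memLp hΩ (memL2V_comp h2 i)) (hφ.curl i)
    rw [← zextV_comp] at this
    exact this

theorem h01_div {Ω : Set Vec} (hΩ : MeasurableSet Ω) {v : Vec → Vec} {J : Vec → Mat} (h : MemH01V Ω v J) :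
    MemH0Div Ω v (fun z => ∑ c, J z c c) := by
  obtain ⟨h1, h2, h3⟩ := h
  refine ⟨h1, memLp_finsetSum _ fun c _ => h2 c c, fun φ hφ => ?_⟩
  have e0 : ∀ x, zextS Ω (fun z => ∑ c, J z c c) x * φ x = ∑ c, zextS Ω (fun z => J z c c) x * φ x := by
    intro x
    rw [← Finset.sum_mul]
    congr 1
    simp only [zextS, Set.indicator]
    split_ifs <;> simp
  have e1 : ∀ x, dot3 (zextV Ω v x) (grad3 φ x) = ∑ c, zextS Ω (fun z => v z c) x * pd c φ x := by
    intro x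
    simp only [dot3, ← zextV_comp]
    rfl
  simp only [e0, e1]
  rw [integral_finsetSum, integral_finsetSum, ← Finset.sum_neg_distrib]
  · exact Finset.sum_congr rfl fun c _ => h3 c c φ hφ
  · exact fun c _ => test_int (zextS_memLp hΩ (memL2V_comp h1 c)) (hφ.pd c)
  · exact fun c _ => test_int (zextS_memLp hΩ (h2 c c)) hφ


theorem BD.tan_eq {T : Tetra} {lam g} (h : BD T lam g) {C r r' : Vec → Vec} {n : ℕ} (hC : VPolyDeg n C)
    (hr : VPolyDeg 1 r) (hr' : VPolyDeg 1 r')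
    (H : ∀ a q, MemRT (T.outNormal a) q →
      faceTanMoment T a (fun x => C x + curl3 (fun y => bub lam y • r y) x) q
        = faceTanMoment T a (fun x => C x + curl3 (fun y => bub lam y • r' y) x) q) :
    ∀ x, r x = r' x := by
  have c1 := vpoly_cont (vpoly_curl (n := 4) (h.vbub hr))
  have c2 := vpoly_cont (vpoly_curl (n := 4) (h.vbub hr'))
  have key := h.tw_unisolv (vpoly_sub hr hr') (by
    intro a q hq
    have e : curl3 (fun y => bub lam y • (r y - r' y)) =
        fun x => (C x + curl3 (fun y => bub lam y • r y) x) - (C x + curl3 (fun y => bub lam y • r' y) x) := by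
      funext x
      have := curl_sub (vpoly_diff (h.vbub hr)) (vpoly_diff (h.vbub hr')) x
      simp only [smul_sub]
      rw [this]; abel
    rw [e]
    refine (h.tan_sub a ((vpoly_cont hC).add c1) ((vpoly_cont hC).add c2) (rt_cont hq)).trans ?_
    exact sub_eq_zero.2 (H a q hq))
  intro x
  exact sub_eq_zero.1 (key x)

theorem bubble_bd {T : Tetra} {b : Vec → ℝ} (hb : T.IsBubble b) : ∃ lam g, BD T lam g ∧ b = bub lam := by
  obtain ⟨lam, hl, hb⟩ := hb
  obtain ⟨g, h⟩ := bd_exists T lam hl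
  exact ⟨lam, g, h, funext hb⟩

theorem cross_sub_right (u v w : Vec) : cross3 u (v - w) = cross3 u v - cross3 u w := by
  ext i; fin_cases i <;> simp [cross3] <;> ring

theorem nd_sub {k : ℕ} {u v : Vec → Vec} (hu : MemND k u) (hv : MemND k v) : MemND k fun x => u x - v x := by
  obtain ⟨q, p, hq, hp, hu⟩ := hu
  obtain ⟨q', p', hq', hp', hv⟩ := hv
  refine ⟨fun x => q x - q' x, fun x => p x - p' x, hq.sub hq', vpoly_sub hp hp', fun x => ?_⟩
  have : grad3 (fun x => q x - q' x) x = grad3 q x - grad3 q' x := by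
    funext i; exact pd_sub hq.differentiable hq'.differentiable i x
  simp only [hu, hv, this, cross_sub_right]; abel

theorem gc_decomp {k : ℕ} (hk : k = 1 ∨ k = 2) {T : Tetra} {w N : Vec → Vec} (hw : MemW k T w) (hN : MemND k N)
    (He : ∀ a b, a ≠ b → ∀ q, PolyDeg k q → edgeMoment T a b w q = edgeMoment T a b N q)
    (Hf : ∀ a, ∀ q, MemRM k (T.outNormal a) q → faceTanMoment T a w q = faceTanMoment T a N q) :
    ∃ lam g r, BD T lam g ∧ VPolyDeg 1 r ∧ w = fun x => N x + bub lam x • r x := by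
  obtain ⟨q, p, r, b, hb, hq, hp, hr, hw⟩ := hw
  obtain ⟨lam, g, h, rfl⟩ := bubble_bd hb
  refine ⟨lam, g, r, h, hr, ?_⟩
  have h0 : MemND k fun x => grad3 q x + cross3 x (p x) := ⟨q, p, hq, hp, fun x => rfl⟩
  have c0 := vpoly_cont (nd_poly hk h0)
  have cN := vpoly_cont (nd_poly hk hN)
  have key := h.nd_unisolv hk (nd_sub h0 hN) (by
    intro a b hab s hs
    rw [h.edge_sub a b hab c0 cN hs.cont, ← He a b hab s hs, sub_eq_zero]
    refine edge_congr T a b s fun x hx => ?_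
    rw [hw, h.bub_zero_edge a b x hx, zero_smul, add_zero]) (by
    intro a s hs
    rw [h.tan_sub a c0 cN (rm_cont hs), ← Hf a s hs, sub_eq_zero]
    refine tan_congr T a s fun x hx => ?_
    rw [hw, h.bub_zero a x hx, zero_smul, add_zero])
  funext x
  rw [hw, sub_eq_zero.1 (key x)]

theorem vd_decomp {T : Tetra} {y B : Vec → Vec} (hy : MemVd T y) (hB : VPolyDeg 1 B)
    (H : ∀ a q, PolyDeg 1 q → faceNorMoment T a y q = faceNorMoment T a B q) :
    ∃ lam g r, BD T lam g ∧ VPolyDeg 1 r ∧ y = fun x => B x + curl3 (fun y => bub lam y • r y) x := by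
  obtain ⟨p, r, b, hb, hp, hr, hy⟩ := hy
  obtain ⟨lam, g, h, rfl⟩ := bubble_bd hb
  refine ⟨lam, g, r, h, hr, ?_⟩
  have key := h.nor_unisolv (vpoly_sub hp hB) (by
    intro a s hs
    rw [h.nor_sub a (vpoly_cont hp) (vpoly_cont hB) hs.cont, ← H a s hs, sub_eq_zero]
    refine nor_congr T a s fun x hx => ?_
    rw [hy, dot3_add_left, h.bub_nor hr a x hx, add_zero])
  funext x
  rw [hy, sub_eq_zero.1 (key x)]

theorem curl_gc {k : ℕ} (hk : k = 1 ∨ k = 2) {T : Tetra} {lam g} (h : BD T lam g) {N r : Vec → Vec}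
    (hN : MemND k N) (hr : VPolyDeg 1 r) :
    curl3 (fun x => N x + bub lam x • r x) = fun x => curl3 N x + curl3 (fun y => bub lam y • r y) x := by
  funext x
  exact curl_add (vpoly_diff (nd_poly hk hN)) (vpoly_diff (h.vbub hr)) x

theorem core_ii {k : ℕ} (hk : k = 1 ∨ k = 2) {T : Tetra} {w y N : Vec → Vec} (hw : MemW k T w) (hN : MemND k N)
    (He : ∀ a b, a ≠ b → ∀ q, PolyDeg k q → edgeMoment T a b w q = edgeMoment T a b N q)
    (Hf : ∀ a, ∀ q, MemRM k (T.outNormal a) q → faceTanMoment T a w q = faceTanMoment T a N q)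
    (hy : MemVd T y)
    (Hn : ∀ a q, PolyDeg 1 q → faceNorMoment T a y q = faceNorMoment T a (curl3 N) q)
    (Ht : ∀ a q, MemRT (T.outNormal a) q → faceTanMoment T a y q = faceTanMoment T a (curl3 w) q) :
    y = curl3 w := by
  have hC : VPolyDeg 1 (curl3 N) := vpoly_curl (nd_poly hk hN)
  obtain ⟨lam, g, r, h, hr, rfl⟩ := gc_decomp hk hw hN He Hf
  obtain ⟨lam', g', r', h', hr', rfl⟩ := vd_decomp hy hC Hn
  obtain rfl := h.unique h'
  rw [curl_gc hk h hN hr] at Ht ⊢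
  have := funext (h.tan_eq hC hr' hr Ht)
  rw [this]

theorem core_i {k : ℕ} (hk : k = 1 ∨ k = 2) {T : Tetra} {w N : Vec → Vec} (hw : MemW k T w) (hN : MemND k N)
    (He : ∀ a b, a ≠ b → ∀ q, PolyDeg k q → edgeMoment T a b w q = edgeMoment T a b N q)
    (Hf : ∀ a, ∀ q, MemRM k (T.outNormal a) q → faceTanMoment T a w q = faceTanMoment T a N q)
    (Ht : ∀ a q, MemRT (T.outNormal a) q → faceTanMoment T a (curl3 w) q = faceTanMoment T a (curl3 N) q) :
    w = N := by
  have hC : VPolyDeg 1 (curl3 N) := vpoly_curl (nd_poly hk hN)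
  obtain ⟨lam, g, r, h, hr, rfl⟩ := gc_decomp hk hw hN He Hf
  rw [curl_gc hk h hN hr] at Ht
  have z : curl3 (fun y : Vec => bub lam y • (0 : Vec)) = fun _ => 0 := by
    funext x; ext i; fin_cases i <;> simp [curl3, pd]
  have := h.tan_eq hC hr (r' := fun _ => 0) (fun i => polyDeg_const 1 0) (by
    intro a q hq
    rw [Ht a q hq, z]; simp)
  funext x
  simp [this]

theorem core_iii {T : Tetra} {y B : Vec → Vec} (hy : MemVd T y) (hB : VPolyDeg 1 B)
    (H : ∀ a q, PolyDeg 1 q → faceNorMoment T a y q = faceNorMoment T a B q) (x : Vec) :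
    div3 y x = div3 B x := by
  obtain ⟨lam, g, r, h, hr, rfl⟩ := vd_decomp hy hB H
  have hc := vpoly_curl (n := 4) (h.vbub hr)
  rw [div_add (vpoly_diff hB) (vpoly_diff hc), div_curl (h.vbub hr), add_zero]

theorem tan_zero (T : Tetra) (a : Fin 4) {u q : Vec → Vec} (h : ∀ x ∈ T.face a, u x = 0) :
    faceTanMoment T a u q = 0 := by
  rw [tan_congr T a q (v := fun _ => 0) h]
  simp [faceTanMoment, cross3, dot3, Fin.sum_univ_three]

theorem memW_bd {k : ℕ} {T : Tetra} {w : Vec → Vec} (h : MemW k T w) : ∃ lam g, BD T lam g := by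
  obtain ⟨q, p, r, b, hb, -⟩ := h
  obtain ⟨lam, g, h, -⟩ := bubble_bd hb
  exact ⟨lam, g, h⟩

theorem part_i {k : ℕ} (hk : k = 1 ∨ k = 2) {M : Mesh} {Ω : Set Vec}
    (hΩ : M.Covers Ω) (F : FW k M Ω) {v gv} (hv : MemH01S Ω v gv) {w : DiscVF M}
    (hw : ∀ i, MemW k (M.el i) (w i)) (hm : MatchIgcInt k M (F.IND gv) w)
    (hb : ∀ i a, (M.el i).face a ⊆ frontier Ω → ∀ q, MemRT ((M.el i).outNormal a) q →
      faceTanMoment (M.el i) a (curl3 (w i)) q = 0 ∨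
      faceTanMoment (M.el i) a (curl3 (w i)) q = faceTanMoment (M.el i) a (curl3 (F.IND gv i)) q)
    (i) (x) (hx : x ∈ (M.el i).K) : w i x = grad3 (F.Ig v i) x := by
  have hm' : MeasurableSet Ω := by rw [hΩ.1]; exact isOpen_interior.measurableSet
  have hc := h01_curl hm' hv
  have hN := F.mapsIND gv _ hc
  have hz : ∀ i, ∀ x ∈ (M.el i).K, curl3 (F.IND gv i) x = 0 := fun i x hx => by
    rw [← F.comm_curl gv _ hc i x hx]; exact F.zeroIBDM i x
  have hzf : ∀ i a q, faceTanMoment (M.el i) a (curl3 (F.IND gv i)) q = 0 := fun i a q =>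
    tan_zero _ a fun x hx => hz i x (face_sub_K _ a hx)
  have := core_i hk (hw i) (hN.1 i) (hm.1 i) (hm.2.1 i) (by
    intro a q hq
    rw [hzf]
    rcases face_dich M Ω hΩ (fun i => memW_bd (hw i)) i a with ⟨j, b, hij, hf⟩ | hf
    · rw [hm.2.2 i j a b hij hf q hq, hzf,
        tan_zero (M.el i) a (u := curl3 (F.IND gv j)) fun x hx => hz j x (face_sub_K _ b (hf ▸ hx))]
      simp
    · rcases hb i a hf q hq with h | h
      · exact h
      · rw [h, hzf])
  rw [this, F.comm_grad v gv hv i x hx]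

theorem part_ii {k : ℕ} (hk : k = 1 ∨ k = 2) {M : Mesh} {Ω : Set Vec}
    (hΩ : M.Covers Ω) (F : FW k M Ω) {u cu} (hu : MemH0Curl Ω u cu) {w y : DiscVF M}
    (hw : ∀ i, MemW k (M.el i) (w i)) (hm : MatchIgcInt k M (F.IND u) w)
    (hy : ∀ i, MemVd (M.el i) (y i)) (hmy : MatchIdInt M (F.IBDM cu) y)
    (hb : (∀ i a, (M.el i).face a ⊆ frontier Ω → ∀ q, MemRT ((M.el i).outNormal a) q →
      (faceTanMoment (M.el i) a (y i) q = 0 ∧ faceTanMoment (M.el i) a (curl3 (w i)) q = 0) ∨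
      (faceTanMoment (M.el i) a (y i) q = faceTanMoment (M.el i) a (F.IBDM cu i) q ∧
       faceTanMoment (M.el i) a (curl3 (w i)) q = faceTanMoment (M.el i) a (curl3 (F.IND u i)) q)))
    (i) : y i = curl3 (w i) := by
  have hN := F.mapsIND u _ hu
  have hz := F.comm_curl u cu hu
  have hzf : ∀ i a q, faceTanMoment (M.el i) a (F.IBDM cu i) q
      = faceTanMoment (M.el i) a (curl3 (F.IND u i)) q := fun i a q =>
    tan_congr _ a q fun x hx => hz i x (face_sub_K _ a hx)
  refine core_ii hk (hw i) (hN.1 i) (hm.1 i) (hm.2.1 i) (hy i) ?_ ?_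
  · intro a q hq
    rw [hmy.1 i a q hq]
    exact nor_congr _ a q fun x hx => by rw [hz i x (face_sub_K _ a hx)]
  · intro a q hq
    rcases face_dich M Ω hΩ (fun i => memW_bd (hw i)) i a with ⟨j, b, hij, hf⟩ | hf
    · rw [hm.2.2 i j a b hij hf q hq, hmy.2 i j a b hij hf q hq, hzf,
        tan_congr (M.el i) a q (u := F.IBDM cu j) fun x hx => hz j x (face_sub_K _ b (hf ▸ hx))]
    · rcases hb i a hf q hq with ⟨h, h'⟩ | ⟨h, h'⟩
      · rw [h, h']
      · rw [h, h', hzf]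


/-- Commutativity of the diagrams (2.9) and (2.10): with the
Falk–Winther projections and the derived interpolations (characterized by their DoFs),
`I_{h0}^{gc}(∇v) = ∇(I_h^g v)`, `I_{h0}^d(curl v) = curl(I_{h0}^{gc} v)`,
`div(I_{h0}^d v) = Q_h(div v)`, and the analogous identities for `I_h^{gc}`, `I_h^d`. -/
theorem statement5 (k : ℕ) (hk : k = 1 ∨ k = 2) (M : Mesh) (Ω : Set Vec)
    (hΩ : M.Covers Ω) (F : FW k M Ω) :
    -- (i)  I_{h0}^{gc}(∇v) = ∇(I_h^g v) for v ∈ H₀¹(Ω)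
    (∀ v gv, MemH01S Ω v gv → ∀ w, IsIgc0 k M Ω (F.IND gv) w →
       ∀ i, ∀ x ∈ (M.el i).K, w i x = grad3 (F.Ig v i) x) ∧
    -- (ii) I_{h0}^d(curl v) = curl (I_{h0}^{gc} v) for v ∈ H₀(grad curl, Ω)
    (∀ u cu J, MemH0GC Ω u cu J → ∀ w, IsIgc0 k M Ω (F.IND u) w →
       ∀ y, IsId0 M Ω (F.IBDM cu) y → ∀ i, ∀ x ∈ (M.el i).K, y i x = curl3 (w i) x) ∧
    -- (iii) div(I_{h0}^d v) = Q_h (div v) for v ∈ H₀¹(Ω;ℝ³)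
    (∀ v J, MemH01V Ω v J → ∀ y, IsId0 M Ω (F.IBDM v) y →
       ∀ i, ∀ x ∈ (M.el i).K, div3 (y i) x = avg M (fun z => ∑ c, J z c c) i) ∧
    -- (i')  for I_h^{gc} on H₀¹(Ω)
    (∀ v gv, MemH01S Ω v gv → ∀ w, IsIgc k M Ω (F.IND gv) w →
       ∀ i, ∀ x ∈ (M.el i).K, w i x = grad3 (F.Ig v i) x) ∧
    -- (ii') for I_h^{gc}, I_h^d on H(grad curl, Ω) ∩ H₀(curl, Ω)
    (∀ u cu J, MemH0Curl Ω u cu → WkJacIn Ω cu J → (∀ a b, MemL2S Ω fun x => J x a b) →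
       ∀ w, IsIgc k M Ω (F.IND u) w →
       ∀ y, IsId M Ω (F.IBDM cu) y → ∀ i, ∀ x ∈ (M.el i).K, y i x = curl3 (w i) x) ∧
    -- (iii') for I_h^d on H¹(Ω;ℝ³) ∩ H₀(div, Ω)
    (∀ v dv J, MemH0Div Ω v dv → WkJacIn Ω v J → (∀ a b, MemL2S Ω fun x => J x a b) →
       ∀ y, IsId M Ω (F.IBDM v) y →
       ∀ i, ∀ x ∈ (M.el i).K, div3 (y i) x = avg M dv i) := by
  have hm' : MeasurableSet Ω := by rw [hΩ.1]; exact isOpen_interior.measurableSet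
  refine ⟨?_, ?_, ?_, ?_, ?_, ?_⟩
  · intro v gv hv w hw i x hx
    exact part_i hk hΩ F hv hw.1.1.1 hw.2 (fun i a hf q hq => Or.inl (hw.1.2 i a hf q hq)) i x hx
  · intro u cu J hu w hw y hy i x hx
    rw [part_ii hk hΩ F hu.1 hw.1.1.1 hw.2 hy.1.1.1 hy.2
      (fun i a hf q hq => Or.inl ⟨hy.1.2 i a hf q hq, hw.1.2 i a hf q hq⟩) i]
  · intro v J hv y hy i x hx
    have hd := h01_div hm' hv
    rw [core_iii (hy.1.1.1 i) ((F.mapsIBDM v _ hd).1 i) (hy.2.1 i) x, F.comm_div v _ hd i x hx]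
  · intro v gv hv w hw i x hx
    exact part_i hk hΩ F hv hw.1.1 hw.2.1 (fun i a hf q hq => Or.inr (hw.2.2 i a hf q hq)) i x hx
  · intro u cu J hu _ _ w hw y hy i x hx
    rw [part_ii hk hΩ F hu hw.1.1 hw.2.1 hy.1.1 hy.2.1
      (fun i a hf q hq => Or.inr ⟨hy.2.2 i a hf q hq, hw.2.2 i a hf q hq⟩) i]
  · intro v dv J hd _ _ y hy i x hx
    rw [core_iii (hy.1.1 i) ((F.mapsIBDM v _ hd).1 i) (hy.2.1.1 i) x, F.comm_div v _ hd i x hx]
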